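/- arXiv:0910.1411 — 6 statements merged into one kernel-verified Lean document; each statement's English description precedes it below -/
import Mathlib

section
/- Let Ω consist of nonzero integers a_1,…,a_r and integers n_1,…,n_r with n_1+⋯+n_r = 0, and let λ_Ω(T) = ∏_{j=1}^{r} (T^{-a_j} − T^{a_j})^{n_j}. Let S be the set consisting of 2 together with all primes dividing at least one a_j. Then the map φ_Ω : W_S → ℚ̄^× defined by φ_Ω(η) = λ_Ω(η) for η ∈ W_S with η ≠ 1, and φ_Ω(1) = ∏_{j=1}^{r} a_j^{n_j}, is well defined (in particular λ_Ω(η) ≠ 0 for all η ∈ W_S, η ≠ 1) and is an Euler system for S. -/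
/-!
Write `[a]_q = (q⁻ᵃ - qᵃ) / (q⁻¹ - q)` for the quantum integer, a Laurent polynomial in `q` whose
value at `q = 1` is `a`. Since `∑ n_j = 0`, the powers of `q⁻¹ - q` cancel in `λ_Ω` and
`φ_Ω(η) = ∏ [a_j]_η ^ n_j` holds for every `η ∈ W_S`, including `η = 1`. Galois equivariance is then
clear, and invariance under `η ↦ η⁻¹` holds because `[a]_q` is a polynomial in `q + q⁻¹`.

The norm relation follows from `∏_{ζ ∈ μ_p} [a]_{ζq} = [a]_{q^p}` for odd `p` prime to `a`. Indeed
`∏_ζ ((ζq)⁻¹ - ζq) = q⁻ᵖ - qᵖ`, and `ζ ↦ ζᵃ` permutes `μ_p`, so multiplying by `q⁻ᵖ - qᵖ` turns both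
sides into `q⁻ᵃᵖ - qᵃᵖ`; the factor can be cancelled when `q` is an indeterminate, and one
specialises.

For the congruence, a `p`-th root of unity reduces to `1` modulo a prime `𝔭` above `p`, so
`[a]_{ζη} ≡ [a]_η`. Both are `𝔭`-units: if `q` has odd order prime to `a`, then `[a]_q = 0` forces
`qᵃ = 1`, hence `q = 1` and `a = 0`, and this holds over every field in place of `ℚ̄`.
-/

open scoped BigOperators

noncomputable section

abbrev Qbar : Type := AlgebraicClosure ℚ

/-- `W_S`: the roots of unity in `ℚ̄` whose order is coprime to every prime in `S`. -/
def WS (S : Finset ℕ) : Set Qbar :=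
  {ζ : Qbar | ∃ n : ℕ, 0 < n ∧ (∀ q ∈ S, Nat.Coprime n q) ∧ ζ ^ n = 1}

/-- Congruence of two algebraic numbers modulo a prime ideal `𝔭` of the ring of all
algebraic integers: `x ≡ y mod 𝔭` in the usual (localized) sense.  This encodes
congruence modulo the prime `𝔭 ∩ 𝒪_K` of any number field `K` containing `x` and `y`. -/
def congMod (𝔭 : Ideal (integralClosure ℤ Qbar)) (x y : Qbar) : Prop :=
  ∃ c : integralClosure ℤ Qbar, c ∉ 𝔭 ∧ ∃ u : integralClosure ℤ Qbar, u ∈ 𝔭 ∧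
    (x - y) * (c : Qbar) = (u : Qbar)

/-- An Euler system for a finite set `S` of rational primes containing `2`:
a map `φ : W_S → ℚ̄ˣ` satisfying the axioms (E1), (E2), (E3). -/
structure IsEulerSystem (S : Finset ℕ) (φ : Qbar → Qbar) : Prop where
  two_mem : 2 ∈ S
  prime_mem : ∀ q ∈ S, Nat.Prime q
  ne_zero : ∀ η ∈ WS S, φ η ≠ 0
  /-- (E1a): Galois equivariance. -/
  galois_equivariant : ∀ σ : Qbar ≃ₐ[ℚ] Qbar, ∀ η ∈ WS S, φ (σ η) = σ (φ η)
  /-- (E1b): `φ(η⁻¹) = φ(η)`. -/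
  map_inv : ∀ η ∈ WS S, φ η⁻¹ = φ η
  /-- (E2): the norm relation `∏_{ζ ∈ μ_p} φ(ζη) = φ(η^p)` for primes `p ∉ S`. -/
  norm_relation : ∀ p : ℕ, p.Prime → p ∉ S → ∀ η ∈ WS S,
    (∏ᶠ (ζ : Qbar) (_ : ζ ^ p = 1), φ (ζ * η)) = φ (η ^ p)
  /-- (E3): the congruence `φ(ζη) ≡ φ(η) mod 𝔭` for all primes `𝔭` above `p ∉ S`,
  whenever `η` has order prime to `p` and `ζ ∈ μ_p`. -/
  congruence : ∀ p : ℕ, p.Prime → p ∉ S → ∀ η ∈ WS S,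
    (∃ n : ℕ, 0 < n ∧ ¬ p ∣ n ∧ η ^ n = 1) →
    ∀ ζ : Qbar, ζ ^ p = 1 →
    ∀ 𝔭 : Ideal (integralClosure ℤ Qbar), 𝔭.IsMaximal → (p : integralClosure ℤ Qbar) ∈ 𝔭 →
      congMod 𝔭 (φ (ζ * η)) (φ η)

open Polynomial LaurentPolynomial

theorem exists_zpow_zpow_eq_self {G : Type*} [Group G] {g : G} {n : ℕ} (hg : g ^ n = 1) {a : ℤ}
    (ha : IsCoprime a n) : ∃ b : ℤ, (g ^ a) ^ b = g := by
  obtain ⟨b, c, hbc⟩ := ha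
  exact ⟨b, by rw [← zpow_mul, mul_comm, eq_sub_of_add_eq hbc, zpow_sub, zpow_mul', zpow_natCast,
    hg, one_zpow, zpow_one, inv_one, mul_one]⟩

theorem zpow_eq_one_iff_of_isCoprime {G : Type*} [Group G] {g : G} {n : ℕ} (hg : g ^ n = 1) {a : ℤ}
    (ha : IsCoprime a n) : g ^ a = 1 ↔ g = 1 := by
  obtain ⟨b, hb⟩ := exists_zpow_zpow_eq_self hg ha
  exact ⟨fun h ↦ by rw [← hb, h, one_zpow], fun h ↦ by rw [h, one_zpow]⟩

theorem zpow_bijective_of_isCoprime_card {G : Type*} [Group G] [Finite G] {a : ℤ}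
    (ha : IsCoprime a (Nat.card G)) : Function.Bijective fun g : G ↦ g ^ a := by
  refine Finite.surjective_iff_bijective.mp fun g ↦ ?_
  obtain ⟨b, hb⟩ := exists_zpow_zpow_eq_self (pow_card_eq_one' (x := g)) ha
  exact ⟨g ^ b, (zpow_comm g b a).trans hb⟩

theorem prod_zpow_eq_zpow_sum₀ {ι M : Type*} [CommGroupWithZero M] (s : Finset ι) (n : ι → ℤ)
    {x : M} (hx : x ≠ 0) : ∏ i ∈ s, x ^ n i = x ^ ∑ i ∈ s, n i := by
  classical
  induction s using Finset.induction_on with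
  | empty => simp
  | insert i s hi ih => rw [Finset.prod_insert hi, Finset.sum_insert hi, zpow_add₀ hx, ih]

section RootsOfUnity

variable {R : Type*} [CommRing R] (n : ℕ) [NeZero n] [Fintype (rootsOfUnity n R)]

theorem finprod_pow_eq_one_eq_prod_rootsOfUnity {M : Type*} [CommMonoid M] (f : R → M) :
    ∏ᶠ (ζ : R) (_ : ζ ^ n = 1), f ζ = ∏ ζ : rootsOfUnity n R, f (ζ : Rˣ) := by
  rw [← finprod_eq_prod_of_fintype, ← finprod_mem_range rootsOfUnity.coe_injective]
  congr! 3 with ζ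
  exact ⟨fun h ↦ ⟨rootsOfUnity.mkOfPowEq ζ h, rootsOfUnity.coe_mkOfPowEq h⟩,
    fun ⟨ξ, hξ⟩ ↦ hξ ▸ (mem_rootsOfUnity' n _).mp ξ.2⟩

variable [IsDomain R]

theorem pow_sub_pow_eq_prod_rootsOfUnity [HasEnoughRootsOfUnity R n] (x y : R) :
    x ^ n - y ^ n = ∏ ζ : rootsOfUnity n R, (x - (ζ : Rˣ) * y) := by
  obtain ⟨ω, hω⟩ := HasEnoughRootsOfUnity.exists_primitiveRoot R n
  rw [hω.pow_sub_pow_eq_prod_sub_mul x y (NeZero.pos n),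
    ← finprod_pow_eq_one_eq_prod_rootsOfUnity n fun ζ ↦ x - ζ * y, ← finprod_mem_finset_eq_prod]
  simp only [mem_nthRootsFinset (NeZero.pos n)]

variable {n} [HasEnoughRootsOfUnity R n]

theorem prod_rootsOfUnity_of_odd (hn : Odd n) :
    ∏ ζ : rootsOfUnity n R, ((ζ : Rˣ) : R) = 1 := by
  have h := pow_sub_pow_eq_prod_rootsOfUnity n (0 : R) (-1)
  rw [zero_pow (NeZero.ne n), hn.neg_one_pow] at h
  simpa using h.symm

theorem prod_rootsOfUnity_zpow {M : Type*} [CommMonoid M] {a : ℤ} (ha : IsCoprime a n)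
    (f : rootsOfUnity n R → M) : ∏ ζ, f (ζ ^ a) = ∏ ζ, f ζ := by
  obtain ⟨ω, hω⟩ := HasEnoughRootsOfUnity.exists_primitiveRoot R n
  rw [← hω.card_rootsOfUnity] at ha
  exact (zpow_bijective_of_isCoprime_card ha).prod_comp f

theorem prod_rootsOfUnity_units_map {A M : Type*} [CommRing A] [IsDomain A]
    [Fintype (rootsOfUnity n A)] [CommMonoid M] {f : R →+* A} (hf : Function.Injective f)
    (g : Aˣ → M) :
    ∏ ζ : rootsOfUnity n R, g (Units.map (f : R →* A) (ζ : Rˣ)) = ∏ ξ : rootsOfUnity n A, g ξ := by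
  obtain ⟨ω, hω⟩ := HasEnoughRootsOfUnity.exists_primitiveRoot R n
  let e : rootsOfUnity n R ≃* rootsOfUnity n A :=
    rootsOfUnityEquivOfPrimitiveRoots hf ⟨ω, (mem_primitiveRoots (NeZero.pos n)).mpr hω⟩
  refine Fintype.prod_equiv e.toEquiv _ _ fun ζ ↦ congrArg g <| Units.ext ?_
  exact (val_rootsOfUnityEquivOfPrimitiveRoots_apply_coe hf _ ζ).symm

end RootsOfUnity

/-- The difference `q⁻¹ - q`, so that `invSub (q ^ a)` is the factor `q ^ (-a) - q ^ a` of
`λ_Ω(q)`. -/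
def invSub {R : Type*} [Ring R] (q : Rˣ) : R := ↑q⁻¹ - ↑q

section InvSub

variable {R : Type*} [CommRing R] {q : Rˣ}

theorem invSub_eq_zero_iff_of_odd {n : ℕ} (hn : Odd n) (hq : q ^ n = 1) :
    invSub q = 0 ↔ q = 1 := by
  have h2 : IsCoprime (2 : ℤ) n := by exact_mod_cast hn.coprime_two_left.isCoprime
  rw [invSub, sub_eq_zero, Units.val_inj, inv_eq_iff_mul_eq_one, ← zpow_two,
    zpow_eq_one_iff_of_isCoprime hq h2]

theorem invSub_zpow_eq_zero_iff {n : ℕ} (hn : Odd n) (hq : q ^ n = 1) {a : ℤ}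
    (ha : IsCoprime a n) : invSub (q ^ a) = 0 ↔ q = 1 := by
  have hqa : (q ^ a) ^ n = 1 := by rw [← zpow_natCast, zpow_comm, zpow_natCast, hq, one_zpow]
  rw [invSub_eq_zero_iff_of_odd hn hqa, zpow_eq_one_iff_of_isCoprime hq ha]

theorem prod_invSub_rootsOfUnity_mul [IsDomain R] {n : ℕ} [NeZero n]
    [Fintype (rootsOfUnity n R)] [HasEnoughRootsOfUnity R n]
    (hn : Odd n) (q : Rˣ) : ∏ ζ : rootsOfUnity n R, invSub ((ζ : Rˣ) * q) = invSub (q ^ n) := by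
  have h2 : IsCoprime (2 : ℤ) n := by exact_mod_cast hn.coprime_two_left.isCoprime
  have factor (ζ : Rˣ) : invSub (ζ * q) = ↑ζ⁻¹ * (↑q⁻¹ - ↑(ζ ^ (2 : ℤ)) * ↑q) := by
    rw [mul_sub, ← mul_assoc, ← Units.val_mul, ← Units.val_mul, ← Units.val_mul, zpow_two,
      inv_mul_cancel_left, ← mul_inv, invSub]
  have prod_inv : ∏ ζ : rootsOfUnity n R, (((ζ⁻¹ : rootsOfUnity n R) : Rˣ) : R) =
      ∏ ζ : rootsOfUnity n R, ((ζ : Rˣ) : R) :=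
    Fintype.prod_equiv (Equiv.inv _) _ _ fun _ ↦ rfl
  calc ∏ ζ : rootsOfUnity n R, invSub ((ζ : Rˣ) * q)
      = ∏ ζ : rootsOfUnity n R, (((ζ⁻¹ : rootsOfUnity n R) : Rˣ) : R) *
          (↑q⁻¹ - (((ζ ^ (2 : ℤ) : rootsOfUnity n R) : Rˣ) : R) * ↑q) :=
        Finset.prod_congr rfl fun ζ _ ↦ factor ζ
    _ = (∏ ζ : rootsOfUnity n R, ((ζ : Rˣ) : R)) *
          ∏ ζ : rootsOfUnity n R, (↑q⁻¹ - ((ζ : Rˣ) : R) * ↑q) := by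
        rw [Finset.prod_mul_distrib, prod_inv,
          prod_rootsOfUnity_zpow h2 fun ζ : rootsOfUnity n R ↦ (↑q⁻¹ - ((ζ : Rˣ) : R) * ↑q : R)]
    _ = invSub (q ^ n) := by
        rw [prod_rootsOfUnity_of_odd hn, one_mul, ← pow_sub_pow_eq_prod_rootsOfUnity, invSub,
          ← Units.val_pow_eq_pow_val, ← Units.val_pow_eq_pow_val, inv_pow]

theorem invSub_zpow_eq_sub {K : Type*} [Field K] (q : Kˣ) (a : ℤ) :
    invSub (q ^ a) = (q : K) ^ (-a) - (q : K) ^ a := by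
  rw [invSub, ← zpow_neg, Units.val_zpow_eq_zpow_val, Units.val_zpow_eq_zpow_val]

theorem invSub_isUnit_T_unit_pow_ne_zero [Nontrivial R] {n : ℕ} (hn : n ≠ 0) :
    invSub ((isUnit_T 1 : IsUnit (T 1 : R[T;T⁻¹])).unit ^ n) ≠ 0 := by
  intro h
  rw [invSub, sub_eq_zero, Units.val_inj, inv_eq_iff_mul_eq_one, ← pow_add] at h
  have hT : (T ((n + n : ℕ) * 1) : R[T;T⁻¹]) = T 0 := by
    rw [← T_pow, T_zero]
    exact congr(($h : R[T;T⁻¹]))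
  have hdeg := congr(($hT).degree)
  rw [degree_T, degree_T] at hdeg
  norm_cast at hdeg
  omega

end InvSub

/-- The balanced quantum integer `[a]_q = (q ^ a - q ^ (-a)) / (q - q⁻¹)`. It is encoded as the
value at `q + q⁻¹` of a rescaled Chebyshev polynomial of the second kind, which makes sense over
every commutative ring and for every unit `q`, including `q = 1`. -/
def quantumInt {R : Type*} [CommRing R] (a : ℤ) (q : Rˣ) : R :=
  (Chebyshev.S R (a - 1)).eval ((q : R) + ↑q⁻¹)

section QuantumInt

variable {R : Type*} [CommRing R] (a : ℤ) (q : Rˣ)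

theorem quantumInt_mul_invSub : quantumInt a q * invSub q = invSub (q ^ a) := by
  have rec_invSub (b : ℤ) :
      ((q : R) + ↑q⁻¹) * invSub (q ^ b) = invSub (q ^ (b + 1)) + invSub (q ^ (b - 1)) := by
    simp only [invSub, zpow_add_one, zpow_sub_one, mul_inv, inv_inv, Units.val_mul]
    ring
  have eval_S (b : ℤ) :
      (Chebyshev.S R b).eval ((q : R) + ↑q⁻¹) * invSub q = invSub (q ^ (b + 1)) := by
    induction b using Chebyshev.induct with
    | zero => simp
    | one => simpa [invSub] using rec_invSub 1
    | add_two b ih₁ ih₀ =>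
      rw [Chebyshev.S_add_two, eval_sub, eval_mul, eval_X, sub_mul, mul_assoc, ih₁, ih₀,
        rec_invSub, add_sub_cancel_right, add_sub_cancel_right]
      ring_nf
    | neg_add_one b ih₀ ih₁ =>
      rw [Chebyshev.S_sub_one, eval_sub, eval_mul, eval_X, sub_mul, mul_assoc, ih₁, ih₀,
        rec_invSub, add_sub_cancel_left, sub_add_cancel, add_sub_cancel_right]
  rw [quantumInt, eval_S, sub_add_cancel]

@[simp]
theorem quantumInt_one_right : quantumInt a (1 : Rˣ) = a := by
  simp [quantumInt, one_add_one_eq_two, Chebyshev.S_eval_two]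

@[simp]
theorem quantumInt_inv : quantumInt a q⁻¹ = quantumInt a q := by
  rw [quantumInt, quantumInt, inv_inv, add_comm]

theorem map_quantumInt {R' : Type*} [CommRing R'] (f : R →+* R') :
    f (quantumInt a q) = quantumInt a (Units.map (f : R →* R') q) := by
  rw [quantumInt, quantumInt, ← eval₂_at_apply, eval₂_eq_eval_map, Chebyshev.map_S, map_add]
  rfl

variable {a q}

theorem quantumInt_ne_zero {n : ℕ} (hn : Odd n) (hq : q ^ n = 1) (ha : IsCoprime a n)
    (ha₀ : (a : R) ≠ 0) : quantumInt a q ≠ 0 := by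
  intro h
  have hqa : invSub (q ^ a) = 0 := by rw [← quantumInt_mul_invSub, h, zero_mul]
  rw [(invSub_zpow_eq_zero_iff hn hq ha).mp hqa, quantumInt_one_right] at h
  exact ha₀ h

section NormRelation

variable [IsDomain R] {n : ℕ} [NeZero n] [Fintype (rootsOfUnity n R)] [HasEnoughRootsOfUnity R n]

theorem prod_quantumInt_rootsOfUnity_mul_of_invSub_ne_zero (hn : Odd n) (ha : IsCoprime a n)
    (hq : invSub (q ^ n) ≠ 0) :
    ∏ ζ : rootsOfUnity n R, quantumInt a ((ζ : Rˣ) * q) = quantumInt a (q ^ n) := by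
  refine mul_right_cancel₀ hq ?_
  calc (∏ ζ : rootsOfUnity n R, quantumInt a ((ζ : Rˣ) * q)) * invSub (q ^ n)
      = ∏ ζ : rootsOfUnity n R, invSub (((ζ ^ a : rootsOfUnity n R) : Rˣ) * q ^ a) := by
        simp only [← prod_invSub_rootsOfUnity_mul hn, ← Finset.prod_mul_distrib,
          quantumInt_mul_invSub, mul_zpow, Subgroup.coe_zpow]
    _ = invSub ((q ^ a) ^ n) := by
        rw [prod_rootsOfUnity_zpow ha fun ζ : rootsOfUnity n R ↦ invSub ((ζ : Rˣ) * q ^ a),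
          prod_invSub_rootsOfUnity_mul hn]
    _ = quantumInt a (q ^ n) * invSub (q ^ n) := by
        rw [quantumInt_mul_invSub, ← zpow_natCast, zpow_comm, zpow_natCast]

theorem prod_quantumInt_rootsOfUnity_mul (hn : Odd n) (ha : IsCoprime a n) (q : Rˣ) :
    ∏ ζ : rootsOfUnity n R, quantumInt a ((ζ : Rˣ) * q) = quantumInt a (q ^ n) := by
  -- Both sides specialise from the generic unit `T`, at which `invSub (T ^ n) ≠ 0`; this covers
  -- the units `q` with `invSub (q ^ n) = 0`.
  let f : R[T;T⁻¹] →+* R := LaurentPolynomial.eval₂ (RingHom.id R) q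
  have C_inj : Function.Injective (LaurentPolynomial.C : R →+* R[T;T⁻¹]) :=
    Function.LeftInverse.injective (g := f) fun r ↦ LaurentPolynomial.eval₂_C _ _ r
  obtain ⟨ω, hω⟩ := HasEnoughRootsOfUnity.exists_primitiveRoot R n
  have : HasEnoughRootsOfUnity R[T;T⁻¹] n :=
    ⟨⟨LaurentPolynomial.C ω, hω.map_of_injective C_inj⟩, rootsOfUnity.isCyclic _ _⟩
  have : Fintype (rootsOfUnity n R[T;T⁻¹]) := Fintype.ofFinite _
  let t : R[T;T⁻¹]ˣ := (isUnit_T 1).unit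
  have map_t : Units.map (f : R[T;T⁻¹] →* R) t = q := Units.ext (by simp [f, t])
  have map_C (ζ : Rˣ) : Units.map (f : R[T;T⁻¹] →* R)
      (Units.map ((LaurentPolynomial.C : R →+* R[T;T⁻¹]) : R →* R[T;T⁻¹]) ζ) = ζ :=
    Units.ext (by simp [f])
  calc ∏ ζ : rootsOfUnity n R, quantumInt a ((ζ : Rˣ) * q)
      = f (∏ ζ : rootsOfUnity n R, quantumInt a
          (Units.map ((LaurentPolynomial.C : R →+* R[T;T⁻¹]) : R →* R[T;T⁻¹]) ζ * t)) := by
        simp only [map_prod, map_quantumInt, map_mul, map_t, map_C]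
    _ = f (∏ ξ : rootsOfUnity n R[T;T⁻¹], quantumInt a ((ξ : R[T;T⁻¹]ˣ) * t)) := by
        rw [prod_rootsOfUnity_units_map C_inj fun ξ ↦ quantumInt a (ξ * t)]
    _ = quantumInt a (q ^ n) := by
        rw [prod_quantumInt_rootsOfUnity_mul_of_invSub_ne_zero hn ha
          (invSub_isUnit_T_unit_pow_ne_zero (NeZero.ne n)), map_quantumInt, map_pow, map_t]

end NormRelation

end QuantumInt

/-- The product `∏ [a_j]_q ^ n_j` of quantum integers. When `∑ n_j = 0` it is `λ_Ω(q)` for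
`q ^ 2 ≠ 1`, and its value `∏ a_j ^ n_j` at `q = 1` is the one prescribed for `φ_Ω(1)`. -/
def quantumProd {ι K : Type*} [Fintype ι] [Field K] (a n : ι → ℤ) (q : Kˣ) : K :=
  ∏ j, quantumInt (a j) q ^ n j

section QuantumProd

variable {ι K : Type*} [Fintype ι] [Field K] (a n : ι → ℤ) (q : Kˣ)

@[simp]
theorem quantumProd_one_right : quantumProd a n (1 : Kˣ) = ∏ j, (a j : K) ^ n j := by
  simp [quantumProd]

@[simp]
theorem quantumProd_inv : quantumProd a n q⁻¹ = quantumProd a n q := by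
  simp [quantumProd]

theorem map_quantumProd {L : Type*} [Field L] (f : K →+* L) :
    f (quantumProd a n q) = quantumProd a n (Units.map (f : K →* L) q) := by
  simp only [quantumProd, map_prod, map_zpow₀, map_quantumInt]

variable {a n q}

theorem quantumProd_ne_zero {m : ℕ} (hm : Odd m) (hq : q ^ m = 1) (ham : ∀ j, IsCoprime (a j) m)
    (ha : ∀ j, (a j : K) ≠ 0) : quantumProd a n q ≠ 0 :=
  Finset.prod_ne_zero_iff.mpr fun j _ ↦
    zpow_ne_zero _ (quantumInt_ne_zero hm hq (ham j) (ha j))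

theorem quantumProd_eq_prod_invSub (hn : ∑ j, n j = 0) (hq : invSub q ≠ 0) :
    quantumProd a n q = ∏ j, invSub (q ^ a j) ^ n j := by
  simp only [← quantumInt_mul_invSub, mul_zpow, Finset.prod_mul_distrib,
    prod_zpow_eq_zpow_sum₀ _ _ hq, hn, zpow_zero, mul_one, quantumProd]

theorem prod_quantumProd_rootsOfUnity_mul {p : ℕ} [NeZero p] [Fintype (rootsOfUnity p K)]
    [HasEnoughRootsOfUnity K p] (hp : Odd p) (hap : ∀ j, IsCoprime (a j) p) (q : Kˣ) :
    ∏ ζ : rootsOfUnity p K, quantumProd a n ((ζ : Kˣ) * q) = quantumProd a n (q ^ p) := by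
  simp only [quantumProd]
  rw [Finset.prod_comm]
  simp only [Finset.prod_zpow, prod_quantumInt_rootsOfUnity_mul hp (hap _)]

end QuantumProd

section Congruence

theorem eq_one_of_pow_prime_eq_one {A : Type*} [CommRing A] [IsDomain A] {p : ℕ} (hp : p.Prime)
    (hpA : (p : A) = 0) {x : A} (hx : x ^ p = 1) : x = 1 := by
  have := Fact.mk hp
  have : CharP A p := (CharP.charP_iff_prime_eq_zero hp).mpr hpA
  exact frobenius_inj A p (by simpa [frobenius_def] using hx)

theorem intCast_ne_zero_of_isCoprime {A : Type*} [CommRing A] [Nontrivial A] {a b : ℤ}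
    (h : IsCoprime a b) (hb : (b : A) = 0) : (a : A) ≠ 0 := by
  have h' : IsCoprime (a : A) b := h.intCast
  rw [hb, isCoprime_zero_right] at h'
  exact h'.ne_zero

theorem exists_units_integralClosure_map_eq {R B : Type*} [CommRing R] [CommRing B] [Algebra R B]
    {q : Bˣ} {m : ℕ} (hm : m ≠ 0) (hq : q ^ m = 1) :
    ∃ u : (integralClosure R B)ˣ,
      u ^ m = 1 ∧ Units.map (algebraMap (integralClosure R B) B : _ →* B) u = q := by
  have hq' : (q : B) ^ m = 1 := by rw [← Units.val_pow_eq_pow_val, hq, Units.val_one]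
  have hint : IsIntegral R (q : B) := .of_pow (Nat.pos_of_ne_zero hm) (hq' ▸ isIntegral_one)
  exact ⟨Units.ofPowEqOne ⟨q, hint⟩ m (Subtype.ext hq') hm, Units.pow_ofPowEqOne _ _,
    Units.ext rfl⟩

variable {ι : Type*} [Fintype ι] {P : Ideal (integralClosure ℤ Qbar)}

theorem congMod_prod_zpow (hP : P.IsPrime) {x y : ι → integralClosure ℤ Qbar}
    (hxy : ∀ i, Ideal.Quotient.mk P (x i) = Ideal.Quotient.mk P (y i)) (hy : ∀ i, y i ∉ P)
    (n : ι → ℤ) : congMod P (∏ i, (x i : Qbar) ^ n i) (∏ i, (y i : Qbar) ^ n i) := by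
  have hx (i : ι) : x i ∉ P := by
    rw [← Ideal.Quotient.eq_zero_iff_mem, hxy, Ideal.Quotient.eq_zero_iff_mem]
    exact hy i
  have clear_denom {z : integralClosure ℤ Qbar} (hz : z ∉ P) (k : ℤ) :
      (z : Qbar) ^ k * (z : Qbar) ^ (-k).toNat = (z : Qbar) ^ k.toNat := by
    have hz₀ : (z : Qbar) ≠ 0 := fun h ↦
      hz (ZeroMemClass.coe_eq_zero.mp h ▸ P.zero_mem)
    rw [← zpow_natCast, ← zpow_natCast, ← zpow_add₀ hz₀]
    congr 1
    omega
  refine ⟨∏ i, x i ^ (-n i).toNat * y i ^ (-n i).toNat, ?_,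
    ∏ i, x i ^ (n i).toNat * y i ^ (-n i).toNat - ∏ i, y i ^ (n i).toNat * x i ^ (-n i).toNat,
    ?_, ?_⟩
  · rw [hP.prod_mem_iff]
    rintro ⟨i, -, h⟩
    exact (hP.mem_or_mem h).elim (fun h ↦ hx i (hP.mem_of_pow_mem _ h))
      fun h ↦ hy i (hP.mem_of_pow_mem _ h)
  · rw [← Ideal.Quotient.eq]
    simp only [map_prod, map_mul, map_pow, hxy]
  · push_cast
    rw [sub_mul, ← Finset.prod_mul_distrib, ← Finset.prod_mul_distrib]
    congr 1 <;> refine Finset.prod_congr rfl fun i _ ↦ ?_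
    · rw [← mul_assoc, clear_denom (hx i)]
    · rw [mul_left_comm, clear_denom (hy i), mul_comm]

theorem congMod_quantumProd (hP : P.IsPrime) {p : ℕ} (hp : p.Prime)
    (hpP : (p : integralClosure ℤ Qbar) ∈ P) {a : ι → ℤ} (hap : ∀ j, IsCoprime (a j) p)
    (n : ι → ℤ) {ζ q : Qbarˣ} (hζ : ζ ^ p = 1) {m : ℕ} (hm : Odd m) (hq : q ^ m = 1)
    (ham : ∀ j, IsCoprime (a j) m) :
    congMod P (quantumProd a n (ζ * q)) (quantumProd a n q) := by
  obtain ⟨ξ, hξ, rfl⟩ := exists_units_integralClosure_map_eq (R := ℤ) hp.ne_zero hζ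
  obtain ⟨u, hu, rfl⟩ := exists_units_integralClosure_map_eq (R := ℤ) hm.pos.ne' hq
  let π := Ideal.Quotient.mk P
  have hpπ : ((p : ℤ) : integralClosure ℤ Qbar ⧸ P) = 0 := by
    rw [Int.cast_natCast, ← map_natCast π, Ideal.Quotient.eq_zero_iff_mem]
    exact hpP
  have hξπ : Units.map (π : _ →* integralClosure ℤ Qbar ⧸ P) ξ = 1 := Units.ext <|
    eq_one_of_pow_prime_eq_one hp (by exact_mod_cast hpπ)
      (by rw [← Units.val_pow_eq_pow_val, ← map_pow, hξ, map_one, Units.val_one])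
  rw [← map_mul]
  simp only [quantumProd, ← map_quantumInt]
  refine congMod_prod_zpow hP (fun j ↦ ?_) (fun j hj ↦ ?_) n
  · rw [map_quantumInt, map_quantumInt, map_mul, hξπ, one_mul]
  · rw [← Ideal.Quotient.eq_zero_iff_mem, map_quantumInt] at hj
    exact quantumInt_ne_zero hm (by rw [← map_pow, hu, map_one]) (ham j)
      (intCast_ne_zero_of_isCoprime (hap j) hpπ) hj

end Congruence

/-- The set `W_S` as a group of units of `ℚ̄`, on which `quantumProd` is defined. -/
def unitsWS (S : Finset ℕ) : Subgroup Qbarˣ where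
  carrier := {q | (q : Qbar) ∈ WS S}
  one_mem' := ⟨1, one_pos, fun _ _ ↦ Nat.coprime_one_left _, one_pow _⟩
  mul_mem' := by
    rintro q r ⟨m, hm, hmS, hq⟩ ⟨k, hk, hkS, hr⟩
    refine ⟨m * k, Nat.mul_pos hm hk, fun p hp ↦ (hmS p hp).mul_left (hkS p hp), ?_⟩
    rw [Units.val_mul, mul_pow, pow_mul, hq, one_pow, mul_comm m, pow_mul, hr, one_pow, one_mul]
  inv_mem' := by
    rintro q ⟨m, hm, hmS, hq⟩
    exact ⟨m, hm, hmS, by rw [Units.val_inv_eq_inv_val, inv_pow, hq, inv_one]⟩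

section UnitsWS

variable {S : Finset ℕ}

theorem exists_mem_unitsWS_val_eq {η : Qbar} (hη : η ∈ WS S) :
    ∃ q ∈ unitsWS S, (q : Qbar) = η := by
  obtain ⟨m, hm, -, hηm⟩ := id hη
  exact ⟨Units.ofPowEqOne η m hηm hm.ne', hη, rfl⟩

theorem coprime_of_prime_notMem (hS : ∀ l ∈ S, l.Prime) {p : ℕ} (hp : p.Prime) (hpS : p ∉ S) :
    ∀ l ∈ S, p.Coprime l := fun l hl ↦
  (Nat.coprime_primes hp (hS l hl)).mpr fun h ↦ hpS (h ▸ hl)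

theorem rootsOfUnity_le_unitsWS (hS : ∀ l ∈ S, l.Prime) {p : ℕ} (hp : p.Prime) (hpS : p ∉ S) :
    rootsOfUnity p Qbar ≤ unitsWS S := fun ζ hζ ↦
  ⟨p, hp.pos, coprime_of_prime_notMem hS hp hpS, (mem_rootsOfUnity' p ζ).mp hζ⟩

theorem isCoprime_of_primeFactors_subset {a : ℤ} (ha : a ≠ 0) (haS : a.natAbs.primeFactors ⊆ S)
    {m : ℕ} (hm : ∀ l ∈ S, m.Coprime l) : IsCoprime a m := by
  rw [Int.isCoprime_iff_nat_coprime, Int.natAbs_natCast]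
  refine Nat.coprime_of_dvd fun l hl hla hlm ↦ hl.one_lt.ne' ?_
  have hlS : l ∈ S := haS (Nat.mem_primeFactors.mpr ⟨hl, hla, Int.natAbs_ne_zero.mpr ha⟩)
  exact Nat.eq_one_of_dvd_coprimes (hm l hlS) hlm dvd_rfl

variable {ι : Type*} {a : ι → ℤ}

theorem exists_odd_isCoprime_pow_eq_one (h2 : 2 ∈ S) (ha : ∀ j, a j ≠ 0)
    (haS : ∀ j, (a j).natAbs.primeFactors ⊆ S) {q : Qbarˣ} (hq : q ∈ unitsWS S) :
    ∃ m : ℕ, Odd m ∧ (∀ j, IsCoprime (a j) m) ∧ q ^ m = 1 := by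
  obtain ⟨m, -, hmS, hqm⟩ := hq
  exact ⟨m, Nat.coprime_two_right.mp (hmS 2 h2),
    fun j ↦ isCoprime_of_primeFactors_subset (ha j) (haS j) hmS, Units.ext hqm⟩

variable [Fintype ι] {n : ι → ℤ} {φ : Qbar → Qbar}

theorem eq_quantumProd_of_mem_unitsWS (h2 : 2 ∈ S) (hn : ∑ j, n j = 0)
    (hφ : ∀ η ∈ WS S, η ≠ 1 → φ η = ∏ j, (η ^ (-(a j)) - η ^ (a j)) ^ n j)
    (hφ₁ : φ 1 = ∏ j, (a j : Qbar) ^ n j) {q : Qbarˣ} (hq : q ∈ unitsWS S) :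
    φ q = quantumProd a n q := by
  obtain rfl | hq₁ := eq_or_ne q 1
  · rw [Units.val_one, hφ₁, quantumProd_one_right]
  · obtain ⟨m, -, hmS, hqm⟩ := id hq
    have hinv : invSub q ≠ 0 :=
      (invSub_eq_zero_iff_of_odd (Nat.coprime_two_right.mp (hmS 2 h2)) (Units.ext hqm)).not.mpr hq₁
    rw [hφ q hq (Units.val_eq_one.not.mpr hq₁), quantumProd_eq_prod_invSub hn hinv]
    simp only [invSub_zpow_eq_sub]

theorem finprod_eq_of_eq_quantumProd (hS : ∀ l ∈ S, l.Prime) (h2 : 2 ∈ S)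
    (ha : ∀ j, a j ≠ 0) (haS : ∀ j, (a j).natAbs.primeFactors ⊆ S)
    (hφ : ∀ q ∈ unitsWS S, φ q = quantumProd a n q) {p : ℕ} (hp : p.Prime) (hpS : p ∉ S)
    {q : Qbarˣ} (hq : q ∈ unitsWS S) :
    ∏ᶠ (ζ : Qbar) (_ : ζ ^ p = 1), φ (ζ * q) = φ ((q : Qbar) ^ p) := by
  have := Fact.mk hp
  have : Fintype (rootsOfUnity p Qbar) := Fintype.ofFinite _
  have hpc := coprime_of_prime_notMem hS hp hpS
  rw [finprod_pow_eq_one_eq_prod_rootsOfUnity p fun ζ ↦ φ (ζ * q), ← Units.val_pow_eq_pow_val,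
    hφ _ (pow_mem hq p), ← prod_quantumProd_rootsOfUnity_mul
      (Nat.coprime_two_right.mp (hpc 2 h2))
      fun j ↦ isCoprime_of_primeFactors_subset (ha j) (haS j) hpc]
  refine Finset.prod_congr rfl fun ζ _ ↦ ?_
  rw [← Units.val_mul, hφ _ (mul_mem (rootsOfUnity_le_unitsWS hS hp hpS ζ.2) hq)]

theorem isEulerSystem_of_eq_quantumProd (hS : ∀ l ∈ S, l.Prime) (h2 : 2 ∈ S)
    (ha : ∀ j, a j ≠ 0) (haS : ∀ j, (a j).natAbs.primeFactors ⊆ S)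
    (hφ : ∀ q ∈ unitsWS S, φ q = quantumProd a n q) : IsEulerSystem S φ where
  two_mem := h2
  prime_mem := hS
  ne_zero η hη := by
    obtain ⟨q, hq, rfl⟩ := exists_mem_unitsWS_val_eq hη
    obtain ⟨m, hm, ham, hqm⟩ := exists_odd_isCoprime_pow_eq_one h2 ha haS hq
    rw [hφ q hq]
    exact quantumProd_ne_zero hm hqm ham fun j ↦ Int.cast_ne_zero.mpr (ha j)
  galois_equivariant σ η hη := by
    obtain ⟨q, hq, rfl⟩ := exists_mem_unitsWS_val_eq hη
    have hσq : Units.map (σ : Qbar →* Qbar) q ∈ unitsWS S := by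
      obtain ⟨m, hm, hmS, hqm⟩ := hη
      exact ⟨m, hm, hmS, by rw [Units.coe_map, ← map_pow, hqm, map_one]⟩
    rw [hφ q hq]
    exact (hφ _ hσq).trans (map_quantumProd a n q (σ : Qbar →+* Qbar)).symm
  map_inv η hη := by
    obtain ⟨q, hq, rfl⟩ := exists_mem_unitsWS_val_eq hη
    rw [← Units.val_inv_eq_inv_val, hφ _ (inv_mem hq), hφ q hq, quantumProd_inv]
  norm_relation p hp hpS η hη := by
    obtain ⟨q, hq, rfl⟩ := exists_mem_unitsWS_val_eq hη
    exact finprod_eq_of_eq_quantumProd hS h2 ha haS hφ hp hpS hq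
  congruence p hp hpS η hη _ ζ hζ 𝔭 h𝔭 hp𝔭 := by
    obtain ⟨q, hq, rfl⟩ := exists_mem_unitsWS_val_eq hη
    obtain ⟨m, hm, ham, hqm⟩ := exists_odd_isCoprime_pow_eq_one h2 ha haS hq
    have hζ' : Units.ofPowEqOne ζ p hζ hp.ne_zero ^ p = 1 := Units.pow_ofPowEqOne _ _
    have h := congMod_quantumProd h𝔭.isPrime hp hp𝔭 (fun j ↦ isCoprime_of_primeFactors_subset
      (ha j) (haS j) (coprime_of_prime_notMem hS hp hpS)) n hζ' hm hqm ham
    rwa [← hφ _ (mul_mem (rootsOfUnity_le_unitsWS hS hp hpS hζ') hq), ← hφ q hq] at h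

end UnitsWS

theorem eulerSystem_of_cyclotomic_data_general {ι : Type*} [Fintype ι] {a n : ι → ℤ}
    (ha : ∀ j, a j ≠ 0) (hn : ∑ j, n j = 0) {S : Finset ℕ} (hS : ∀ l ∈ S, l.Prime) (h2 : 2 ∈ S)
    (haS : ∀ j, (a j).natAbs.primeFactors ⊆ S) {φ : Qbar → Qbar}
    (hφ : ∀ η ∈ WS S, η ≠ 1 → φ η = ∏ j, (η ^ (-(a j)) - η ^ (a j)) ^ n j)
    (hφ₁ : φ 1 = ∏ j, (a j : Qbar) ^ n j) :
    (∀ η ∈ WS S, η ≠ 1 → ∀ j, η ^ (-(a j)) - η ^ (a j) ≠ 0) ∧ IsEulerSystem S φ := by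
  refine ⟨fun η hη hη₁ j ↦ ?_, isEulerSystem_of_eq_quantumProd hS h2 ha haS
    fun q hq ↦ eq_quantumProd_of_mem_unitsWS h2 hn hφ hφ₁ hq⟩
  obtain ⟨q, hq, rfl⟩ := exists_mem_unitsWS_val_eq hη
  obtain ⟨m, hm, ham, hqm⟩ := exists_odd_isCoprime_pow_eq_one h2 ha haS hq
  rw [← invSub_zpow_eq_sub]
  exact (invSub_zpow_eq_zero_iff hm hqm (ham j)).not.mpr (Units.val_eq_one.not.mp hη₁)

/-- The map `φ_Ω` built from the data `Ω = (a_j, n_j)_{j=1..r}` with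
`∑ n_j = 0` via `λ_Ω(T) = ∏ (T^{-a_j} - T^{a_j})^{n_j}` for `η ≠ 1`, together with
`φ_Ω(1) = ∏ a_j^{n_j}`, is well defined (the factors `η^{-a_j} - η^{a_j}` are nonzero
for `η ∈ W_S`, `η ≠ 1`) and is an Euler system for the set `S` consisting of `2` and
the primes dividing at least one `a_j`. -/
theorem eulerSystem_of_cyclotomic_data
    (r : ℕ) (a : Fin r → ℤ) (ha : ∀ j, a j ≠ 0)
    (nn : Fin r → ℤ) (hsum : ∑ j, nn j = 0)
    (S : Finset ℕ)
    (hS : S = insert 2 (Finset.univ.biUnion fun j : Fin r => (a j).natAbs.primeFactors))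
    (φ : Qbar → Qbar)
    (hφ1 : ∀ η : Qbar, η ≠ 1 → φ η = ∏ j, (η ^ (-(a j)) - η ^ (a j)) ^ (nn j))
    (hφ2 : φ 1 = ∏ j, (a j : Qbar) ^ (nn j)) :
    (∀ η ∈ WS S, η ≠ 1 → ∀ j, η ^ (-(a j)) - η ^ (a j) ≠ 0) ∧
    IsEulerSystem S φ := by
  subst hS
  refine eulerSystem_of_cyclotomic_data_general ha hsum (fun l hl ↦ ?_) (Finset.mem_insert_self ..)
    (fun j ↦ ?_) (fun η _ ↦ hφ1 η) hφ2
  · obtain rfl | hl := Finset.mem_insert.mp hl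
    · exact Nat.prime_two
    · obtain ⟨j, -, hlj⟩ := Finset.mem_biUnion.mp hl
      exact Nat.prime_of_mem_primeFactors hlj
  · exact (Finset.subset_biUnion_of_mem (fun j ↦ (a j).natAbs.primeFactors)
      (Finset.mem_univ j)).trans (Finset.subset_insert ..)
end
end

section
/- Let φ : W_S → ℚ̄^× be an Euler system for S, let n be a nonzero integer, and let S′ = S ∪ {primes dividing n}. Then the map W_{S′} → ℚ̄^× given by η ↦ φ(ηⁿ) is an Euler system for S′. -/
open scoped BigOperators

noncomputable section

/-! Adding primes to `S` only weakens the axioms, so one may assume that `S` contains every prime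
dividing `n`. Then for `p ∉ S` the map `ζ ↦ ζⁿ` permutes `μ_p`, and since
`(ζη)ⁿ = ζⁿηⁿ`, the axioms for `η ↦ φ(ηⁿ)` at `η` are those for `φ` at `ηⁿ`. -/

theorem zpow_pow_eq_one_of_pow_eq_one {G : Type*} [DivisionMonoid G] {x : G} {k : ℕ}
    (hx : x ^ k = 1) (n : ℤ) : (x ^ n) ^ k = 1 := by
  rw [← zpow_natCast, zpow_comm, zpow_natCast, hx, one_zpow]

theorem zpow_eq_self_of_pow_eq_one {G₀ : Type*} [GroupWithZero G₀] {x : G₀} {k : ℕ}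
    (hx : x ^ k = 1) {m : ℤ} (hm : m ≡ 1 [ZMOD k]) : x ^ m = x := by
  rcases eq_or_ne k 0 with rfl | hk
  · rw [Int.modEq_zero_iff.1 hm, zpow_one]
  obtain ⟨c, hc⟩ := hm.symm.dvd
  have hx₀ : x ≠ 0 := (IsUnit.of_pow_eq_one hx hk).ne_zero
  rw [eq_add_of_sub_eq hc, zpow_add₀ hx₀, zpow_mul, zpow_natCast, hx, one_zpow, one_mul, zpow_one]

theorem bijOn_zpow_of_isCoprime (G₀ : Type*) [GroupWithZero G₀] {n : ℤ} {k : ℕ}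
    (h : IsCoprime n k) :
    Set.BijOn (fun x : G₀ => x ^ n) {x | x ^ k = 1} {x | x ^ k = 1} := by
  obtain ⟨a, b, hab⟩ := h
  have hmod : a * n ≡ 1 [ZMOD k] :=
    Int.modEq_iff_dvd.2 ⟨b, by linear_combination -hab⟩
  refine Set.InvOn.bijOn (f' := fun x : G₀ => x ^ a) ⟨fun x hx => ?_, fun x hx => ?_⟩
    (fun x hx => zpow_pow_eq_one_of_pow_eq_one hx n)
    (fun x hx => zpow_pow_eq_one_of_pow_eq_one hx a)
  · change (x ^ n) ^ a = x
    rw [← zpow_mul', zpow_eq_self_of_pow_eq_one hx hmod]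
  · change (x ^ a) ^ n = x
    rw [← zpow_mul, zpow_eq_self_of_pow_eq_one hx hmod]

theorem finprod_mem_comp_zpow_of_isCoprime {G₀ M : Type*} [GroupWithZero G₀] [CommMonoid M]
    {n : ℤ} {k : ℕ} (h : IsCoprime n k) (f : G₀ → M) :
    (∏ᶠ (x : G₀) (_ : x ^ k = 1), f (x ^ n)) = ∏ᶠ (x : G₀) (_ : x ^ k = 1), f x :=
  finprod_mem_eq_of_bijOn _ (bijOn_zpow_of_isCoprime G₀ h) fun _ _ => rfl

theorem WS_antitone : Antitone WS :=
  fun _ _ hST _ ⟨m, hm, hcop, hη⟩ => ⟨m, hm, fun q hq => hcop q (hST hq), hη⟩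

theorem zpow_mem_WS {S : Finset ℕ} {η : Qbar} (hη : η ∈ WS S) (n : ℤ) : η ^ n ∈ WS S :=
  let ⟨m, hm, hcop, hηm⟩ := hη
  ⟨m, hm, hcop, zpow_pow_eq_one_of_pow_eq_one hηm n⟩

namespace IsEulerSystem

variable {S T : Finset ℕ} {φ : Qbar → Qbar}

theorem mono (hφ : IsEulerSystem S φ) (hST : S ⊆ T) (hT : ∀ q ∈ T, q.Prime) :
    IsEulerSystem T φ where
  two_mem := hST hφ.two_mem
  prime_mem := hT
  ne_zero η hη := hφ.ne_zero η (WS_antitone hST hη)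
  galois_equivariant σ η hη := hφ.galois_equivariant σ η (WS_antitone hST hη)
  map_inv η hη := hφ.map_inv η (WS_antitone hST hη)
  norm_relation p hp hpT η hη :=
    hφ.norm_relation p hp (fun hpS => hpT (hST hpS)) η (WS_antitone hST hη)
  congruence p hp hpT η hη :=
    hφ.congruence p hp (fun hpS => hpT (hST hpS)) η (WS_antitone hST hη)

theorem comp_zpow (hφ : IsEulerSystem S φ) {n : ℤ}
    (hn : ∀ p : ℕ, p.Prime → p ∉ S → IsCoprime n p) :
    IsEulerSystem S (fun η => φ (η ^ n)) where
  two_mem := hφ.two_mem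
  prime_mem := hφ.prime_mem
  ne_zero η hη := hφ.ne_zero _ (zpow_mem_WS hη n)
  galois_equivariant σ η hη := by
    rw [← map_zpow₀]
    exact hφ.galois_equivariant σ _ (zpow_mem_WS hη n)
  map_inv η hη := by
    rw [inv_zpow]
    exact hφ.map_inv _ (zpow_mem_WS hη n)
  norm_relation p hp hpS η hη :=
    calc (∏ᶠ (ζ : Qbar) (_ : ζ ^ p = 1), φ ((ζ * η) ^ n))
        = ∏ᶠ (ζ : Qbar) (_ : ζ ^ p = 1), φ (ζ ^ n * η ^ n) := by simp only [mul_zpow]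
      _ = ∏ᶠ (ζ : Qbar) (_ : ζ ^ p = 1), φ (ζ * η ^ n) :=
          finprod_mem_comp_zpow_of_isCoprime (hn p hp hpS) fun ζ => φ (ζ * η ^ n)
      _ = φ ((η ^ n) ^ p) := hφ.norm_relation p hp hpS _ (zpow_mem_WS hη n)
      _ = φ ((η ^ p) ^ n) := by rw [← zpow_natCast, zpow_comm, zpow_natCast]
  congruence p hp hpS η hη := by
    rintro ⟨m, hm, hpm, hηm⟩ ζ hζ 𝔭 h𝔭 hp𝔭
    rw [mul_zpow]
    exact hφ.congruence p hp hpS _ (zpow_mem_WS hη n)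
      ⟨m, hm, hpm, zpow_pow_eq_one_of_pow_eq_one hηm n⟩ _
      (zpow_pow_eq_one_of_pow_eq_one hζ n) 𝔭 h𝔭 hp𝔭

end IsEulerSystem

/-- If `φ` is an Euler system for `S` and `n` is a nonzero integer, then
`η ↦ φ(ηⁿ)` is an Euler system for `S' = S ∪ {primes dividing n}`. -/
theorem eulerSystem_comp_zpow
    (S : Finset ℕ) (φ : Qbar → Qbar) (hφ : IsEulerSystem S φ)
    (n : ℤ) (hn : n ≠ 0) :
    IsEulerSystem (S ∪ n.natAbs.primeFactors) (fun η => φ (η ^ n)) := by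
  have hprime : ∀ q ∈ S ∪ n.natAbs.primeFactors, q.Prime := fun q hq =>
    (Finset.mem_union.1 hq).elim (hφ.prime_mem q) Nat.prime_of_mem_primeFactors
  have hcoprime : ∀ p : ℕ, p.Prime → p ∉ S ∪ n.natAbs.primeFactors → IsCoprime n p := by
    intro p hp hpS
    have hpn : ¬ p ∣ n.natAbs := fun hdvd => hpS <| Finset.mem_union_right S <|
      Nat.mem_primeFactors.2 ⟨hp, hdvd, Int.natAbs_ne_zero.2 hn⟩
    exact Int.isCoprime_iff_gcd_eq_one.2 (hp.coprime_iff_not_dvd.2 hpn).symm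
  exact (hφ.mono Finset.subset_union_left hprime).comp_zpow hcoprime
end
end

section
/- Let φ : W_S → ℚ̄^× be an Euler system for S, let h ≥ 1 be an integer coprime to every prime in S, let ξ be a primitive h-th root of unity, and let S′ = S ∪ {primes dividing h}. Then the map φ_ξ : W_{S′} → ℚ̄^× defined by φ_ξ(η) = ∏_{τ ∈ Gal(ℚ(ξ)/ℚ)} φ(η ξ^τ) is an Euler system for S′. -/
open scoped BigOperators

noncomputable section

/-!
The product over `Gal(ℚ(ξ)/ℚ)` runs over the primitive `h`-th roots of unity `ρ`, and for `p ∤ h`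
these are permuted by Galois automorphisms, by inversion and by `ρ ↦ ρ ^ p`. This gives (E1) and
(E2) factor by factor. Congruences may be multiplied only when the factors are integral at `𝔭`, so
(E3) needs `φ η` to lie in the local ring `𝒪_𝔭` whenever `η` has order prime to `p`. Put
`x k = φ (η ^ p ^ k)`. By (E2) and (E3), `x (k + 1)` is the product of the `p` numbers
`φ (ζ * η ^ p ^ k)`, each of which differs from `x k` by an element of `𝒪_𝔭`; hence `x (k + 1)` is a
monic polynomial of degree `p` over `𝒪_𝔭` in `x k`. As the sequence `x` is periodic, composing these
polynomials over a period yields a monic equation for `φ η`, and `𝒪_𝔭` is integrally closed.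
-/

open Polynomial IntermediateField

section RootsOfUnity

lemma pow_pow_totient_eq_self {M : Type*} [Monoid M] {x : M} {m n : ℕ} (hmn : m.Coprime n)
    (hx : x ^ n = 1) : x ^ m ^ n.totient = x :=
  (pow_eq_pow_of_modEq (Nat.ModEq.pow_totient hmn) hx).trans (pow_one x)

lemma injOn_pow_primitiveRoots {R : Type*} [CommRing R] [IsDomain R] {m n : ℕ}
    (hmn : m.Coprime n) : Set.InjOn (fun ρ : R => ρ ^ m) (primitiveRoots n R) := by
  rcases n.eq_zero_or_pos with rfl | hn
  · simp
  refine Set.LeftInvOn.injOn (f₁' := fun ρ => ρ ^ m ^ (n.totient - 1)) fun ρ hρ => ?_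
  have hρn : ρ ^ n = 1 := (isPrimitiveRoot_of_mem_primitiveRoots hρ).pow_eq_one
  calc (ρ ^ m) ^ m ^ (n.totient - 1) = ρ ^ m ^ n.totient := by
        rw [← pow_mul, mul_pow_sub_one (Nat.totient_pos.2 hn).ne']
    _ = ρ := pow_pow_totient_eq_self hmn hρn

lemma prod_primitiveRoots_comp {R M : Type*} [CommRing R] [IsDomain R] [CommMonoid M] {n : ℕ}
    {e : R → R} (he : ∀ ρ, IsPrimitiveRoot ρ n → IsPrimitiveRoot (e ρ) n)
    (hinj : Set.InjOn e (primitiveRoots n R)) (f : R → M) :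
    ∏ ρ ∈ primitiveRoots n R, f (e ρ) = ∏ ρ ∈ primitiveRoots n R, f ρ := by
  rcases n.eq_zero_or_pos with rfl | hn
  · simp
  have hmaps : Set.MapsTo e (primitiveRoots n R) (primitiveRoots n R) := fun ρ hρ =>
    (mem_primitiveRoots hn).2 (he ρ (isPrimitiveRoot_of_mem_primitiveRoots hρ))
  exact Finset.prod_nbij e hmaps hinj (Finset.surjOn_of_injOn_of_card_le e hmaps hinj le_rfl)
    fun _ _ => rfl

lemma finprod_pow_eq_one_eq_prod {R M : Type*} [CommRing R] [IsDomain R] [CommMonoid M] {n : ℕ}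
    (hn : 0 < n) (f : R → M) :
    (∏ᶠ (ζ : R) (_ : ζ ^ n = 1), f ζ) = ∏ ζ ∈ nthRootsFinset n (1 : R), f ζ :=
  finprod_cond_eq_prod_of_cond_iff f fun _ => (mem_nthRootsFinset hn 1).symm

end RootsOfUnity

section CyclotomicOrbit

variable {K L : Type*} [Field K] [Field L] [Algebra K L]

lemma injective_aut_adjoin_apply_gen (ξ : L) :
    Function.Injective fun τ : K⟮ξ⟯ ≃ₐ[K] K⟮ξ⟯ => (τ (AdjoinSimple.gen K ξ) : L) := by
  intro τ τ' hττ'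
  refine AlgEquiv.coe_toAlgHom_injective (algHom_ext_of_eq_adjoin K rfl ?_)
  rintro x rfl
  exact Subtype.ext hττ'

lemma isCyclotomicExtension_adjoin_primitiveRoot {n : ℕ} [NeZero n] {ξ : L}
    (hξ : IsPrimitiveRoot ξ n) : IsCyclotomicExtension {n} K K⟮ξ⟯ := by
  have halg : IsAlgebraic K ξ := (hξ.isIntegral (NeZero.pos n)).tower_top.isAlgebraic
  change IsCyclotomicExtension {n} K K⟮ξ⟯.toSubalgebra
  rw [adjoin_simple_toSubalgebra_of_isAlgebraic halg]
  exact hξ.adjoin_isCyclotomicExtension K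

lemma range_aut_adjoin_apply_gen {n : ℕ} [NeZero (n : K)] {ξ : L} (hξ : IsPrimitiveRoot ξ n)
    (hirr : Irreducible (cyclotomic n K)) :
    Set.range (fun τ : K⟮ξ⟯ ≃ₐ[K] K⟮ξ⟯ => (τ (AdjoinSimple.gen K ξ) : L)) =
      primitiveRoots n L := by
  have : NeZero n := .of_neZero_natCast K
  have : IsCyclotomicExtension {n} K K⟮ξ⟯ := isCyclotomicExtension_adjoin_primitiveRoot hξ
  have : IsGalois K K⟮ξ⟯ := IsCyclotomicExtension.isGalois {n} K _
  have hgen : IsPrimitiveRoot (AdjoinSimple.gen K ξ) n :=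
    IsPrimitiveRoot.coe_submonoidClass_iff.1 hξ
  ext ρ
  rw [Finset.mem_coe, mem_primitiveRoots (NeZero.pos n)]
  constructor
  · rintro ⟨τ, rfl⟩
    exact IsPrimitiveRoot.coe_submonoidClass_iff.2 (hgen.map_of_injective τ.injective)
  · intro hρ
    obtain ⟨i, -, rfl⟩ := hξ.eq_pow_of_pow_eq_one hρ.pow_eq_one
    have hconj : IsConjRoot K (AdjoinSimple.gen K ξ ^ i) (AdjoinSimple.gen K ξ) :=
      ((IsPrimitiveRoot.coe_submonoidClass_iff.1 hρ).minpoly_eq_cyclotomic_of_irreducible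
        hirr).symm.trans (hgen.minpoly_eq_cyclotomic_of_irreducible hirr)
    obtain ⟨τ, hτ⟩ := isConjRoot_iff_exists_algEquiv.1 hconj
    exact ⟨τ, congrArg Subtype.val hτ⟩

lemma finprod_aut_adjoin_eq_prod_primitiveRoots {M : Type*} [CommMonoid M] {n : ℕ}
    [NeZero (n : K)] {ξ : L} (hξ : IsPrimitiveRoot ξ n) (hirr : Irreducible (cyclotomic n K))
    (f : L → M) :
    ∏ᶠ τ : K⟮ξ⟯ ≃ₐ[K] K⟮ξ⟯, f (τ (AdjoinSimple.gen K ξ)) = ∏ ρ ∈ primitiveRoots n L, f ρ := by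
  rw [← finprod_mem_range (f := f) (injective_aut_adjoin_apply_gen ξ),
    range_aut_adjoin_apply_gen hξ hirr, finprod_mem_coe_finset]

end CyclotomicOrbit

section MonicRecurrence

variable {R A : Type*} [CommRing R] [Nontrivial R] [CommRing A] [Algebra R A]

lemma exists_monic_aeval_eq_prod {ι : Type*} {s : Finset ι} {f : ι → A} {y : A}
    (hf : ∀ i ∈ s, ∃ c : R, algebraMap R A c = f i - y) :
    ∃ P : R[X], P.Monic ∧ P.natDegree = s.card ∧ aeval y P = ∏ i ∈ s, f i := by
  choose! c hc using hf
  have hmonic : ∀ i ∈ s, (X + C (c i)).Monic := fun i _ => monic_X_add_C _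
  refine ⟨∏ i ∈ s, (X + C (c i)), monic_prod_of_monic _ _ hmonic, ?_, ?_⟩
  · simp [natDegree_prod_of_monic _ _ hmonic]
  · rw [map_prod]
    refine Finset.prod_congr rfl fun i hi => ?_
    rw [map_add, aeval_X, aeval_C, hc i hi, add_sub_cancel]

variable {d : ℕ} {x : ℕ → A}

lemma exists_monic_aeval_eq_of_recurrence (hd : d ≠ 0)
    (hx : ∀ k, ∃ P : R[X], P.Monic ∧ P.natDegree = d ∧ aeval (x k) P = x (k + 1)) (k : ℕ) :
    ∃ P : R[X], P.Monic ∧ P.natDegree = d ^ k ∧ aeval (x 0) P = x k := by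
  induction k with
  | zero => exact ⟨X, monic_X, by simp, aeval_X _⟩
  | succ k ih =>
    obtain ⟨P, hP, hPdeg, hPx⟩ := ih
    obtain ⟨Q, hQ, hQdeg, hQx⟩ := hx k
    refine ⟨Q.comp P, hQ.comp hP (hPdeg ▸ pow_ne_zero k hd), ?_, ?_⟩
    · rw [natDegree_comp_eq_of_mul_ne_zero (by simp [hP.leadingCoeff, hQ.leadingCoeff]), hPdeg,
        hQdeg, pow_succ']
    · rw [aeval_comp, hPx, hQx]

lemma isIntegral_of_periodic_recurrence (hd : 1 < d)
    (hx : ∀ k, ∃ P : R[X], P.Monic ∧ P.natDegree = d ∧ aeval (x k) P = x (k + 1)) {n : ℕ}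
    (hn : n ≠ 0) (hperiod : x n = x 0) : IsIntegral R (x 0) := by
  obtain ⟨P, hP, hPdeg, hPx⟩ := exists_monic_aeval_eq_of_recurrence (by lia) hx n
  have hdeg : (X : R[X]).degree < P.degree := by
    rw [degree_X, degree_eq_natDegree hP.ne_zero, hPdeg]
    exact_mod_cast Nat.one_lt_pow hn hd
  refine ⟨P - X, hP.sub_of_left hdeg, ?_⟩
  rw [← aeval_def, map_sub, hPx, aeval_X, hperiod, sub_self]

end MonicRecurrence

section LocalRing

variable {A : Type*} [CommRing A] [IsDomain A] (K : Type*) [Field K] [Algebra A K]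
  [IsFractionRing A K] (𝔭 : Ideal A) [𝔭.IsPrime]

/-- The localization `A_𝔭` of a domain at a prime ideal, realized inside the fraction field. -/
abbrev localRingAt : Subalgebra A K :=
  Localization.subalgebra.ofField K 𝔭.primeCompl 𝔭.primeCompl_le_nonZeroDivisors

variable {K 𝔭} in
lemma mem_localRingAt_iff {x : K} :
    x ∈ localRingAt K 𝔭 ↔ ∃ c ∉ 𝔭, ∃ a : A, x * algebraMap A K c = algebraMap A K a := by
  have algebraMap_ne_zero {c : A} (hc : c ∉ 𝔭) : algebraMap A K c ≠ 0 := by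
    rw [Ne, FaithfulSMul.algebraMap_eq_zero_iff]
    rintro rfl
    exact hc 𝔭.zero_mem
  constructor
  · rintro ⟨a, c, hc, rfl⟩
    exact ⟨c, hc, a, inv_mul_cancel_right₀ (algebraMap_ne_zero hc) _⟩
  · rintro ⟨c, hc, a, h⟩
    exact ⟨a, c, hc, (eq_mul_inv_iff_mul_eq₀ (algebraMap_ne_zero hc)).2 h⟩

lemma isIntegrallyClosed_localRingAt [IsIntegrallyClosed A] :
    IsIntegrallyClosed (localRingAt K 𝔭) :=
  isIntegrallyClosed_of_isLocalization _ 𝔭.primeCompl 𝔭.primeCompl_le_nonZeroDivisors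

end LocalRing

instance Qbar.isAlgebraic_int : Algebra.IsAlgebraic ℤ Qbar := by
  have : Algebra.IsAlgebraic ℚ Qbar := by
    rw [Subsingleton.elim DivisionRing.toRatAlgebra (AlgebraicClosure.instAlgebra ℚ)]
    exact AlgebraicClosure.isAlgebraic ℚ
  exact (IsFractionRing.comap_isAlgebraic_iff (K := ℚ)).2 this

instance Qbar.isFractionRing_integralClosure : IsFractionRing (integralClosure ℤ Qbar) Qbar :=
  integralClosure.isFractionRing_of_algebraic fun _ => by simp

instance Qbar.isIntegrallyClosed_integralClosure : IsIntegrallyClosed (integralClosure ℤ Qbar) :=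
  (isIntegrallyClosed_iff_isIntegrallyClosedIn Qbar).2 inferInstance

namespace congMod

variable {𝔭 : Ideal (integralClosure ℤ Qbar)} [𝔭.IsPrime]

lemma sub_mem_localRingAt {x y : Qbar} (h : congMod 𝔭 x y) : x - y ∈ localRingAt Qbar 𝔭 := by
  obtain ⟨c, hc, u, -, hu⟩ := h
  exact mem_localRingAt_iff.2 ⟨c, hc, u, hu⟩

variable (𝔭) in
lemma refl (x : Qbar) : congMod 𝔭 x x :=
  ⟨1, 𝔭.one_notMem, 0, 𝔭.zero_mem, by simp⟩

lemma mul {x x' y y' : Qbar} (hx : congMod 𝔭 x x') (hy : congMod 𝔭 y y')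
    (hx' : x' ∈ localRingAt Qbar 𝔭) (hy' : y' ∈ localRingAt Qbar 𝔭) :
    congMod 𝔭 (x * y) (x' * y') := by
  obtain ⟨c, hc, u, hu, hcu⟩ := hx
  -- Clear denominators in `x * y - x' * y' = (x - x') * (y - y' + y') + (y - y') * x'`.
  obtain ⟨d, hd, v, hv, hdv⟩ := hy
  obtain ⟨s, hs, a, hsa⟩ := mem_localRingAt_iff.1 hx'
  obtain ⟨t, ht, b, htb⟩ := mem_localRingAt_iff.1 hy'
  refine ⟨c * d * (s * t), 𝔭.primeCompl.mul_mem (𝔭.primeCompl.mul_mem hc hd)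
    (𝔭.primeCompl.mul_mem hs ht), u * (v * s * t + d * s * b) + v * (a * c * t),
    𝔭.add_mem (𝔭.mul_mem_right _ hu) (𝔭.mul_mem_right _ hv), ?_⟩
  change (x' : Qbar) * (s : Qbar) = a at hsa
  change (y' : Qbar) * (t : Qbar) = b at htb
  push_cast
  rw [← hcu, ← hdv, ← hsa, ← htb]
  ring

lemma prod {ι : Type*} {s : Finset ι} {f g : ι → Qbar} (hfg : ∀ i ∈ s, congMod 𝔭 (f i) (g i))
    (hg : ∀ i ∈ s, g i ∈ localRingAt Qbar 𝔭) : congMod 𝔭 (∏ i ∈ s, f i) (∏ i ∈ s, g i) := by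
  classical
  induction s using Finset.induction_on with
  | empty => exact refl 𝔭 1
  | insert i s hi ih =>
    rw [Finset.forall_mem_insert] at hfg hg
    rw [Finset.prod_insert hi, Finset.prod_insert hi]
    exact mul hfg.1 (ih hfg.2 hg.2) hg.1 (prod_mem hg.2)

end congMod

namespace WS

variable {S T : Finset ℕ} {η ρ : Qbar}

lemma anti (hST : S ⊆ T) : WS T ⊆ WS S := by
  rintro η ⟨n, hn, hcop, hηn⟩
  exact ⟨n, hn, fun q hq => hcop q (hST hq), hηn⟩

lemma mul_mem (hη : η ∈ WS S) (hρ : ρ ∈ WS S) : η * ρ ∈ WS S := by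
  obtain ⟨n, hn, hnS, hηn⟩ := hη
  obtain ⟨m, hm, hmS, hρm⟩ := hρ
  refine ⟨n * m, Nat.mul_pos hn hm, fun q hq => (hnS q hq).mul_left (hmS q hq), ?_⟩
  rw [mul_pow, pow_mul, hηn, one_pow, pow_mul', hρm, one_pow, one_mul]

lemma pow_mem (hη : η ∈ WS S) (k : ℕ) : η ^ k ∈ WS S := by
  obtain ⟨n, hn, hnS, hηn⟩ := hη
  exact ⟨n, hn, hnS, by rw [pow_right_comm, hηn, one_pow]⟩

lemma mem_singleton_iff {p : ℕ} (hp : p.Prime) :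
    η ∈ WS {p} ↔ ∃ n : ℕ, 0 < n ∧ ¬p ∣ n ∧ η ^ n = 1 := by
  simp only [WS, Set.mem_ofPred_eq, Finset.mem_singleton, forall_eq, Nat.coprime_comm (m := p),
    hp.coprime_iff_not_dvd]

lemma mem_of_mem_primitiveRoots {h : ℕ} (hcop : ∀ q ∈ S, h.Coprime q)
    (hρ : ρ ∈ primitiveRoots h Qbar) : ρ ∈ WS S := by
  refine ⟨h, Nat.pos_of_ne_zero ?_, hcop, (isPrimitiveRoot_of_mem_primitiveRoots hρ).pow_eq_one⟩
  rintro rfl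
  simp at hρ

end WS

namespace IsEulerSystem

variable {S : Finset ℕ} {φ : Qbar → Qbar} {h p : ℕ} {η : Qbar}

section Integrality

variable (hφ : IsEulerSystem S φ) (hp : p.Prime) (hpS : p ∉ S)
include hφ hp hpS

lemma prod_nthRoots (hη : η ∈ WS S) :
    ∏ ζ ∈ nthRootsFinset p (1 : Qbar), φ (ζ * η) = φ (η ^ p) := by
  rw [← finprod_pow_eq_one_eq_prod hp.pos, hφ.norm_relation p hp hpS η hη]

variable {𝔭 : Ideal (integralClosure ℤ Qbar)} [𝔭.IsMaximal]
  (hp𝔭 : (p : integralClosure ℤ Qbar) ∈ 𝔭)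
include hp𝔭

lemma exists_monic_aeval_eq_map_pow (hη : η ∈ WS S) (hηp : η ∈ WS {p}) :
    ∃ P : (localRingAt Qbar 𝔭)[X], P.Monic ∧ P.natDegree = p ∧ aeval (φ η) P = φ (η ^ p) := by
  have : NeZero p := ⟨hp.ne_zero⟩
  obtain ⟨z, hz⟩ := HasEnoughRootsOfUnity.exists_primitiveRoot Qbar p
  have hcong {ζ : Qbar} (hζ : ζ ∈ nthRootsFinset p (1 : Qbar)) :
      congMod 𝔭 (φ (ζ * η)) (φ η) :=
    hφ.congruence p hp hpS η hη ((WS.mem_singleton_iff hp).1 hηp) ζ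
      ((mem_nthRootsFinset hp.pos 1).1 hζ) 𝔭 inferInstance hp𝔭
  obtain ⟨P, hP, hPdeg, hPφ⟩ := exists_monic_aeval_eq_prod (R := localRingAt Qbar 𝔭)
    (f := fun ζ => φ (ζ * η)) (y := φ η)
    fun ζ hζ => ⟨⟨_, (hcong hζ).sub_mem_localRingAt⟩, rfl⟩
  exact ⟨P, hP, hPdeg.trans hz.card_nthRootsFinset, hPφ.trans (hφ.prod_nthRoots hp hpS hη)⟩

lemma map_mem_localRingAt (hη : η ∈ WS S) (hηp : η ∈ WS {p}) : φ η ∈ localRingAt Qbar 𝔭 := by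
  obtain ⟨n, hn, hpn, hηn⟩ := (WS.mem_singleton_iff hp).1 hηp
  let x : ℕ → Qbar := fun k => φ (η ^ p ^ k)
  have hrec : ∀ k, ∃ P : (localRingAt Qbar 𝔭)[X],
      P.Monic ∧ P.natDegree = p ∧ aeval (x k) P = x (k + 1) := fun k => by
    simpa only [x, pow_succ, pow_mul] using hφ.exists_monic_aeval_eq_map_pow hp hpS hp𝔭
      (WS.pow_mem hη (p ^ k)) (WS.pow_mem hηp (p ^ k))
  have hperiod : x n.totient = x 0 := by
    simp only [x, pow_zero, pow_one,
      pow_pow_totient_eq_self ((hp.coprime_iff_not_dvd).2 hpn) hηn]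
  have hint : IsIntegral (localRingAt Qbar 𝔭) (x 0) :=
    isIntegral_of_periodic_recurrence hp.one_lt hrec (Nat.totient_pos.2 hn).ne' hperiod
  have := isIntegrallyClosed_localRingAt Qbar 𝔭
  obtain ⟨y, hy⟩ := IsIntegrallyClosed.isIntegral_iff.1 hint
  have hx : x 0 ∈ localRingAt Qbar 𝔭 := hy ▸ y.2
  simpa only [x, pow_zero, pow_one] using hx

end Integrality

/-- The twist `φ_ξ` for `ξ` a primitive `h`-th root of unity; it depends only on `h`, because the
Galois conjugates of `ξ` over `ℚ` are all the primitive `h`-th roots of unity. -/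
def twist (h : ℕ) (φ : Qbar → Qbar) (η : Qbar) : Qbar :=
  ∏ ρ ∈ primitiveRoots h Qbar, φ (η * ρ)

lemma finprod_aut_eq_twist [NeZero h] {ξ : Qbar} (hξ : IsPrimitiveRoot ξ h) (φ : Qbar → Qbar) :
    (fun η => ∏ᶠ τ : ℚ⟮ξ⟯ ≃ₐ[ℚ] ℚ⟮ξ⟯, φ (η * (τ (AdjoinSimple.gen ℚ ξ) : Qbar))) = twist h φ :=
  funext fun η => finprod_aut_adjoin_eq_prod_primitiveRoots hξ
    (cyclotomic.irreducible_rat (NeZero.pos h)) fun ρ => φ (η * ρ)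

variable (hφ : IsEulerSystem S φ) (hcop : ∀ q ∈ S, h.Coprime q)
include hφ hcop

lemma twist_ne_zero (hη : η ∈ WS S) : twist h φ η ≠ 0 :=
  Finset.prod_ne_zero_iff.2 fun _ hρ =>
    hφ.ne_zero _ (WS.mul_mem hη (WS.mem_of_mem_primitiveRoots hcop hρ))

lemma twist_galois (σ : Qbar ≃ₐ[ℚ] Qbar) (hη : η ∈ WS S) :
    twist h φ (σ η) = σ (twist h φ η) := by
  calc twist h φ (σ η) = ∏ ρ ∈ primitiveRoots h Qbar, φ (σ η * σ ρ) :=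
        (prod_primitiveRoots_comp (fun _ hρ => hρ.map_of_injective σ.injective)
          σ.injective.injOn fun ρ => φ (σ η * ρ)).symm
    _ = ∏ ρ ∈ primitiveRoots h Qbar, σ (φ (η * ρ)) := Finset.prod_congr rfl fun ρ hρ => by
        rw [← map_mul, hφ.galois_equivariant σ _
          (WS.mul_mem hη (WS.mem_of_mem_primitiveRoots hcop hρ))]
    _ = σ (twist h φ η) := (map_prod σ _ _).symm

lemma twist_inv (hη : η ∈ WS S) : twist h φ η⁻¹ = twist h φ η := by
  calc twist h φ η⁻¹ = ∏ ρ ∈ primitiveRoots h Qbar, φ (η⁻¹ * ρ⁻¹) :=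
        (prod_primitiveRoots_comp (fun _ hρ => hρ.inv) inv_injective.injOn
          fun ρ => φ (η⁻¹ * ρ)).symm
    _ = twist h φ η := Finset.prod_congr rfl fun ρ hρ => by
        rw [← mul_inv, hφ.map_inv _ (WS.mul_mem hη (WS.mem_of_mem_primitiveRoots hcop hρ))]

section

variable (hp : p.Prime) (hpS : p ∉ S) (hph : p.Coprime h)
include hp hpS hph

lemma twist_norm_relation (hη : η ∈ WS S) :
    (∏ᶠ (ζ : Qbar) (_ : ζ ^ p = 1), twist h φ (ζ * η)) = twist h φ (η ^ p) := by
  calc (∏ᶠ (ζ : Qbar) (_ : ζ ^ p = 1), twist h φ (ζ * η))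
      = ∏ ρ ∈ primitiveRoots h Qbar, ∏ ζ ∈ nthRootsFinset p (1 : Qbar), φ (ζ * (η * ρ)) := by
        simp only [finprod_pow_eq_one_eq_prod hp.pos, twist, mul_assoc]
        exact Finset.prod_comm
    _ = ∏ ρ ∈ primitiveRoots h Qbar, φ (η ^ p * ρ ^ p) := Finset.prod_congr rfl fun ρ hρ => by
        rw [← mul_pow, hφ.prod_nthRoots hp hpS
          (WS.mul_mem hη (WS.mem_of_mem_primitiveRoots hcop hρ))]
    _ = twist h φ (η ^ p) :=
        prod_primitiveRoots_comp (fun _ hρ => hρ.pow_of_coprime p hph)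
          (injOn_pow_primitiveRoots hph) fun ρ => φ (η ^ p * ρ)

lemma twist_congruence (hη : η ∈ WS S) (hηp : η ∈ WS {p}) {ζ : Qbar} (hζ : ζ ^ p = 1)
    {𝔭 : Ideal (integralClosure ℤ Qbar)} [𝔭.IsMaximal]
    (hp𝔭 : (p : integralClosure ℤ Qbar) ∈ 𝔭) :
    congMod 𝔭 (twist h φ (ζ * η)) (twist h φ η) := by
  have hηρ {ρ : Qbar} (hρ : ρ ∈ primitiveRoots h Qbar) : η * ρ ∈ WS S ∧ η * ρ ∈ WS {p} :=
    ⟨WS.mul_mem hη (WS.mem_of_mem_primitiveRoots hcop hρ), WS.mul_mem hηp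
      (WS.mem_of_mem_primitiveRoots (by simpa using hph.symm) hρ)⟩
  refine congMod.prod (fun ρ hρ => ?_) fun ρ hρ =>
    hφ.map_mem_localRingAt hp hpS hp𝔭 (hηρ hρ).1 (hηρ hρ).2
  rw [mul_assoc]
  exact hφ.congruence p hp hpS _ (hηρ hρ).1 ((WS.mem_singleton_iff hp).1 (hηρ hρ).2) ζ hζ 𝔭
    inferInstance hp𝔭

end

theorem isEulerSystem_twist : IsEulerSystem (S ∪ h.primeFactors) (twist h φ) := by
  have hh : h ≠ 0 := by
    rintro rfl
    simpa using hcop 2 hφ.two_mem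
  have notMem_and_coprime {p : ℕ} (hp : p.Prime) (hpS' : p ∉ S ∪ h.primeFactors) :
      p ∉ S ∧ p.Coprime h := by
    simpa [hp, hp.coprime_iff_not_dvd, hh] using hpS'
  have hWS : WS (S ∪ h.primeFactors) ⊆ WS S := WS.anti Finset.subset_union_left
  exact
    { two_mem := Finset.mem_union_left _ hφ.two_mem
      prime_mem := fun q hq =>
        (Finset.mem_union.1 hq).elim (hφ.prime_mem q) Nat.prime_of_mem_primeFactors
      ne_zero := fun η hη => hφ.twist_ne_zero hcop (hWS hη)
      galois_equivariant := fun σ η hη => hφ.twist_galois hcop σ (hWS hη)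
      map_inv := fun η hη => hφ.twist_inv hcop (hWS hη)
      norm_relation := fun p hp hpS' η hη =>
        have ⟨hpS, hph⟩ := notMem_and_coprime hp hpS'
        hφ.twist_norm_relation hcop hp hpS hph (hWS hη)
      congruence := fun p hp hpS' η hη hηp ζ hζ 𝔭 _ hp𝔭 =>
        have ⟨hpS, hph⟩ := notMem_and_coprime hp hpS'
        hφ.twist_congruence hcop hp hpS hph (hWS hη) ((WS.mem_singleton_iff hp).2 hηp) hζ hp𝔭 }

end IsEulerSystem

open IntermediateField in
/-- If `φ` is an Euler system for `S`, `h ≥ 1` is coprime to every prime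
in `S`, and `ξ` is a primitive `h`-th root of unity, then
`φ_ξ(η) = ∏_{τ ∈ Gal(ℚ(ξ)/ℚ)} φ(η ξ^τ)` is an Euler system for
`S' = S ∪ {primes dividing h}`. -/
theorem eulerSystem_twist_by_root_of_unity
    (S : Finset ℕ) (φ : Qbar → Qbar) (hφ : IsEulerSystem S φ)
    (h : ℕ) (hh : 1 ≤ h) (hcop : ∀ q ∈ S, Nat.Coprime h q)
    (ξ : Qbar) (hξ : IsPrimitiveRoot ξ h) :
    IsEulerSystem (S ∪ h.primeFactors)
      (fun η => ∏ᶠ τ : ℚ⟮ξ⟯ ≃ₐ[ℚ] ℚ⟮ξ⟯,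
        φ (η * ((τ ⟨ξ, IntermediateField.mem_adjoin_simple_self ℚ ξ⟩ : ℚ⟮ξ⟯) : Qbar))) := by
  have : NeZero h := ⟨Nat.one_le_iff_ne_zero.1 hh⟩
  have htwist := IsEulerSystem.finprod_aut_eq_twist hξ φ
  exact htwist ▸ hφ.isEulerSystem_twist hcop
end
end

section
/- (Proposition 2.1) Let φ be an Euler system for S, let m ≥ 1 be coprime to every prime in S, and let η ∈ μ_m with η ≠ 1. Let p be a rational prime with p ∤ m and p ∉ S, and let ζ be a primitive p-th root of unity. Then φ(ζη) ∈ H_{mp}, φ(η) ∈ H_m, and N_{H_{mp}/H_m}(φ(ζη)) = φ(η^p)/φ(η) = φ(η)^{Frob_p − 1}, where Frob_p is the Frobenius element at p in Gal(H_m/ℚ) (so that φ(η)^{Frob_p} = φ(η^p)). -/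
open scoped BigOperators

noncomputable section

/-- `H_m = ℚ(μ_m)⁺`, the maximal real subfield of the `m`-th cyclotomic field, realized
inside `ℚ̄` as the field generated by the elements `ζ + ζ⁻¹` for `ζ ∈ μ_m`. -/
def Hplus (m : ℕ) : IntermediateField ℚ Qbar :=
  IntermediateField.adjoin ℚ {x : Qbar | ∃ ζ : Qbar, ζ ^ m = 1 ∧ x = ζ + ζ⁻¹}

/-!
Fix a primitive `m`-th root of unity `ω`. An embedding of `H_{mp}` over `H_m` extends to an
automorphism `σ` of `ℚ̄`, which sends `ω` to `ω` or `ω⁻¹`. Since `H_{mp}` sees `ωζ` only up to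
inversion, in the second case `σ` can be replaced by an automorphism fixing `ω` and sending `ζ` to
`(σ ζ)⁻¹`. For `m > 2`, the embeddings of `H_{mp}` over `H_m` thus correspond to the primitive
`p`-th roots of unity `ξ`, through automorphisms with `ω ↦ ω` and `ζ ↦ ξ`. By Galois equivariance
the norm of `φ(ζη)` is `∏ φ(ξη)` over these `ξ`, which is the product in (E2) without its factor
`φ(η)` at `ξ = 1`.
-/

section RootsOfUnity

theorem pow_eq_one_of_dvd {M : Type*} [Monoid M] {m n : ℕ} (h : m ∣ n) {x : M} (hx : x ^ m = 1) :
    x ^ n = 1 :=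
  orderOf_dvd_iff_pow_eq_one.mp ((orderOf_dvd_of_pow_eq_one hx).trans h)

theorem mul_pow_mul_eq_one {M : Type*} [CommMonoid M] {m n : ℕ} {x y : M} (hx : x ^ m = 1)
    (hy : y ^ n = 1) : (x * y) ^ (m * n) = 1 := by
  rw [mul_pow, pow_eq_one_of_dvd (dvd_mul_right m n) hx, pow_eq_one_of_dvd (dvd_mul_left n m) hy,
    one_mul]

theorem two_lt_of_pow_eq_one_of_coprime_two {M : Type*} [Monoid M] {m : ℕ} (hm : 0 < m)
    (hm₂ : m.Coprime 2) {x : M} (hx : x ^ m = 1) (hx₁ : x ≠ 1) : 2 < m := by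
  have hm_ne_one : m ≠ 1 := by
    rintro rfl
    exact hx₁ (by rwa [pow_one] at hx)
  have hm_odd : ¬ 2 ∣ m := Nat.prime_two.coprime_iff_not_dvd.mp hm₂.symm
  lia

theorem eq_or_eq_inv_of_add_inv_eq_add_inv {K : Type*} [Field K] {a b : K} (ha : a ≠ 0)
    (hb : b ≠ 0) (h : a + a⁻¹ = b + b⁻¹) : a = b ∨ a = b⁻¹ := by
  have hfactor : (a - b) * (a - b⁻¹) = 0 := by
    linear_combination a * h - mul_inv_cancel₀ ha + mul_inv_cancel₀ hb
  exact (mul_eq_zero.mp hfactor).imp sub_eq_zero.mp sub_eq_zero.mp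

theorem eq_and_eq_of_mul_eq_mul_of_coprime {G₀ : Type*} [CommGroupWithZero G₀] {m n : ℕ}
    (hmn : m.Coprime n) {a a' b b' : G₀} (ha'₀ : a' ≠ 0) (ha : a ^ m = 1) (ha' : a' ^ m = 1)
    (hb : b ^ n = 1) (hb' : b' ^ n = 1) (h : a * b = a' * b') : a = a' ∧ b = b' := by
  have hpow : a ^ n = a' ^ n := by
    simpa only [mul_pow, hb, hb', mul_one] using congrArg (· ^ n) h
  have haa' : a = a' := by
    rw [← div_eq_one_iff_eq ha'₀, ← pow_eq_one_iff_of_coprime hmn, div_pow, div_pow, ha, ha', hpow]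
    exact ⟨div_one 1, div_self (pow_ne_zero n ha'₀)⟩
  subst haa'
  exact ⟨rfl, mul_left_cancel₀ ha'₀ h⟩

theorem isPrimitiveRoot_mul_of_coprime {M : Type*} [CommMonoid M] {m n : ℕ} (hmn : m.Coprime n)
    {ω ζ : M} (hω : IsPrimitiveRoot ω m) (hζ : IsPrimitiveRoot ζ n) :
    IsPrimitiveRoot (ω * ζ) (m * n) := by
  rw [hω.eq_orderOf, hζ.eq_orderOf] at hmn ⊢
  rw [← (Commute.all ω ζ).orderOf_mul_eq_mul_orderOf_of_coprime hmn]
  exact IsPrimitiveRoot.orderOf _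

theorem exists_algEquiv_of_isPrimitiveRoot_of_coprime {K E : Type*} [Field K] [Field E]
    [Algebra K E] [Normal K E] {m n : ℕ} [NeZero ((m * n : ℕ) : K)] (hmn : m.Coprime n)
    (hirr : Irreducible (Polynomial.cyclotomic (m * n) K)) {ω ω' ζ ζ' : E}
    (hω : IsPrimitiveRoot ω m) (hω' : IsPrimitiveRoot ω' m)
    (hζ : IsPrimitiveRoot ζ n) (hζ' : IsPrimitiveRoot ζ' n) :
    ∃ σ : E ≃ₐ[K] E, σ ω = ω' ∧ σ ζ = ζ' := by
  have hmn₀ : m * n ≠ 0 := (NeZero.of_neZero_natCast K).ne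
  have hminpoly : minpoly K (ω * ζ) = minpoly K (ω' * ζ') := by
    rw [← (isPrimitiveRoot_mul_of_coprime hmn hω hζ).minpoly_eq_cyclotomic_of_irreducible hirr,
      ← (isPrimitiveRoot_mul_of_coprime hmn hω' hζ').minpoly_eq_cyclotomic_of_irreducible hirr]
  obtain ⟨σ, hσ⟩ := minpoly.exists_algEquiv_of_root' (K := K) (y := ω * ζ) (x := ω' * ζ')
    (Algebra.IsAlgebraic.isAlgebraic _) (hminpoly ▸ minpoly.aeval K (ω' * ζ'))
  rw [map_mul] at hσ
  exact ⟨σ, eq_and_eq_of_mul_eq_mul_of_coprime hmn (hω'.ne_zero (left_ne_zero_of_mul hmn₀))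
    (hω.map_of_injective σ.injective).pow_eq_one hω'.pow_eq_one
    (hζ.map_of_injective σ.injective).pow_eq_one hζ'.pow_eq_one hσ⟩

theorem finprod_mem_pow_eq_one_of_prime {R M : Type*} [CommRing R] [IsDomain R] [CommMonoid M]
    {p : ℕ} (hp : p.Prime) (g : R → M) :
    ∏ᶠ (z : R) (_ : z ^ p = 1), g z = (∏ ξ ∈ primitiveRoots p R, g ξ) * g 1 := by
  classical
  have hdisj : Disjoint (primitiveRoots p R) {1} := by
    rw [Finset.disjoint_singleton_right, mem_primitiveRoots hp.pos]
    exact fun h ↦ hp.ne_one (h.unique .one)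
  simp only [← Polynomial.mem_nthRootsFinset hp.pos, finprod_mem_finset_eq_prod,
    nthRootsFinset_eq_of_prime hp, Finset.prod_union hdisj, Finset.prod_singleton]

end RootsOfUnity

theorem norm_eq_prod_of_bijective_domRestrict {K L E ι : Type*} [Field K] [Field L] [Field E]
    [Algebra K L] [Algebra K E] [Algebra L E] [IsScalarTower K L E] [FiniteDimensional K L]
    [Algebra.IsSeparable K L] [IsAlgClosed E] [Fintype ι] {τ : ι → E →ₐ[K] E}
    (hτ : Function.Bijective fun i ↦ (τ i).domRestrict L) (x : L) :
    algebraMap K E (Algebra.norm K x) = ∏ i, τ i (algebraMap L E x) := by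
  rw [Algebra.norm_eq_prod_embeddings]
  exact (Fintype.prod_bijective _ hτ _ _ fun _ ↦ rfl).symm

namespace Qbar

/- `ℚ` acts on `Qbar` through `DivisionRing.toRatAlgebra`, which instance search does not unify with
`AlgebraicClosure.instAlgebra`, although the two are equal. -/
instance isAlgClosure : IsAlgClosure ℚ Qbar := by
  convert! AlgebraicClosure.instIsAlgClosure ℚ

instance isAlgebraic : Algebra.IsAlgebraic ℚ Qbar := IsAlgClosure.isAlgebraic

instance isGalois : IsGalois ℚ Qbar where
  to_normal := IsAlgClosure.normal ℚ Qbar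

end Qbar

namespace Hplus

variable {m n : ℕ}

theorem add_inv_mem {x : Qbar} (hx : x ^ n = 1) : x + x⁻¹ ∈ Hplus n :=
  IntermediateField.subset_adjoin _ _ ⟨x, hx, rfl⟩

theorem le_of_dvd (h : m ∣ n) : Hplus m ≤ Hplus n := by
  refine IntermediateField.adjoin.mono _ _ _ ?_
  rintro _ ⟨x, hx, rfl⟩
  exact ⟨x, pow_eq_one_of_dvd h hx, rfl⟩

instance finiteDimensional [NeZero n] : FiniteDimensional ℚ (Hplus n) := by
  have hfinite : {x : Qbar | ∃ ζ : Qbar, ζ ^ n = 1 ∧ x = ζ + ζ⁻¹}.Finite := by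
    refine ((Polynomial.nthRootsFinset n (1 : Qbar)).finite_toSet.image fun ζ ↦ ζ + ζ⁻¹).subset ?_
    rintro _ ⟨ζ, hζ, rfl⟩
    exact ⟨ζ, (Polynomial.mem_nthRootsFinset (NeZero.pos n) 1).mpr hζ, rfl⟩
  have := hfinite.to_subtype
  exact IntermediateField.finiteDimensional_adjoin fun x _ ↦ Algebra.IsIntegral.isIntegral x

section EqOn

variable {F : Type*} [Field F] [Algebra ℚ F] {σ τ : Qbar →ₐ[ℚ] F}

theorem apply_eq_or_eq_inv (h : Set.EqOn σ τ (Hplus n)) {x : Qbar} (hx : x ^ n = 1) :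
    σ x = τ x ∨ σ x = (τ x)⁻¹ := by
  rcases eq_or_ne x 0 with rfl | hx₀
  · exact .inl (by rw [map_zero, map_zero])
  · refine eq_or_eq_inv_of_add_inv_eq_add_inv ((map_ne_zero σ).mpr hx₀) ((map_ne_zero τ).mpr hx₀) ?_
    simpa only [map_add, map_inv₀] using h (add_inv_mem hx)

theorem eqOn_of_apply_eq_or_eq_inv [NeZero n] {ω : Qbar} (hω : IsPrimitiveRoot ω n)
    (h : σ ω = τ ω ∨ σ ω = (τ ω)⁻¹) : Set.EqOn σ τ (Hplus n) := by
  rw [← IntermediateField.coe_toSubalgebra, Hplus, IntermediateField.adjoin_toSubalgebra,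
    AlgHom.eqOn_adjoin_iff]
  rintro _ ⟨x, hx, rfl⟩
  obtain ⟨k, -, rfl⟩ := hω.eq_pow_of_pow_eq_one hx
  simp only [map_add, map_inv₀, map_pow]
  rcases h with h | h
  · rw [h]
  · rw [h, inv_pow, inv_inv, add_comm]

end EqOn

section Embeddings

variable {ω ζ : Qbar}

theorem apply_eq_of_eqOn (hm : 2 < m) (hmn : m.Coprime n) (hω : IsPrimitiveRoot ω m)
    (hζ : ζ ^ n = 1) {σ τ : Qbar →ₐ[ℚ] Qbar} (hσ : σ ω = ω) (hτ : τ ω = ω)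
    (h : Set.EqOn σ τ (Hplus (m * n))) : σ ζ = τ ζ := by
  have hω₀ : ω ≠ 0 := hω.ne_zero (by lia)
  have hσζ : σ ζ ^ n = 1 := by rw [← map_pow, hζ, map_one]
  have hτζ : (τ ζ)⁻¹ ^ n = 1 := by rw [inv_pow, ← map_pow, hζ, map_one, inv_one]
  rcases apply_eq_or_eq_inv h (mul_pow_mul_eq_one hω.pow_eq_one hζ) with h | h <;>
    rw [map_mul, map_mul, hσ, hτ] at h
  · exact mul_left_cancel₀ hω₀ h
  · rw [mul_inv] at h
    have hωinv : ω = ω⁻¹ := (eq_and_eq_of_mul_eq_mul_of_coprime hmn (inv_ne_zero hω₀)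
      hω.pow_eq_one hω.inv.pow_eq_one hσζ hτζ h).1
    have hωsq : ω ^ 2 = 1 := by rwa [sq, mul_eq_one_iff_eq_inv₀ hω₀]
    exact absurd (Nat.le_of_dvd two_pos (hω.dvd_of_pow_eq_one 2 hωsq)) hm.not_ge

theorem exists_isPrimitiveRoot_forall_eqOn [NeZero m] [NeZero n] (hmn : m.Coprime n)
    (hω : IsPrimitiveRoot ω m) (hζ : IsPrimitiveRoot ζ n) {σ : Qbar →ₐ[ℚ] Qbar}
    (hσ : Set.EqOn σ id (Hplus m)) :
    ∃ ξ, IsPrimitiveRoot ξ n ∧ ∀ τ : Qbar →ₐ[ℚ] Qbar, τ ω = ω → τ ζ = ξ →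
      Set.EqOn σ τ (Hplus (m * n)) := by
  have hωζ := isPrimitiveRoot_mul_of_coprime hmn hω hζ
  have hσζ : IsPrimitiveRoot (σ ζ) n := hζ.map_of_injective σ.injective
  rcases apply_eq_or_eq_inv (τ := AlgHom.id ℚ Qbar) hσ hω.pow_eq_one with h | h <;>
    rw [AlgHom.id_apply] at h
  · refine ⟨σ ζ, hσζ, fun τ hτω hτζ ↦ eqOn_of_apply_eq_or_eq_inv hωζ (.inl ?_)⟩
    rw [map_mul, map_mul, h, hτω, hτζ]
  · refine ⟨(σ ζ)⁻¹, hσζ.inv, fun τ hτω hτζ ↦ eqOn_of_apply_eq_or_eq_inv hωζ (.inr ?_)⟩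
    rw [map_mul, map_mul, h, hτω, hτζ, mul_inv, inv_inv]

theorem exists_algEquiv_apply_eq [NeZero m] [NeZero n] (hmn : m.Coprime n)
    (hω : IsPrimitiveRoot ω m) (hζ : IsPrimitiveRoot ζ n) {ξ : Qbar} (hξ : IsPrimitiveRoot ξ n) :
    ∃ τ : Qbar ≃ₐ[Hplus m] Qbar, τ ω = ω ∧ τ ζ = ξ := by
  have hirr := Polynomial.cyclotomic.irreducible_rat (NeZero.pos (m * n))
  have : NeZero ((m * n : ℕ) : ℚ) := NeZero.charZero
  obtain ⟨τ, hτω, hτζ⟩ := exists_algEquiv_of_isPrimitiveRoot_of_coprime hmn hirr hω hω hζ hξ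
  have hfix : Set.EqOn (τ : Qbar →ₐ[ℚ] Qbar) (AlgHom.id ℚ Qbar) (Hplus m) :=
    eqOn_of_apply_eq_or_eq_inv hω (.inl hτω)
  exact ⟨{ τ with commutes' := fun x ↦ hfix x.2 }, hτω, hτζ⟩

theorem bijective_domRestrict [NeZero n] (hm : 2 < m) (hmn : m.Coprime n)
    (hω : IsPrimitiveRoot ω m) (hζ : IsPrimitiveRoot ζ n) (hle : Hplus m ≤ Hplus (m * n))
    {τ : primitiveRoots n Qbar → Qbar →ₐ[Hplus m] Qbar} (hτω : ∀ ξ, τ ξ ω = ω)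
    (hτζ : ∀ ξ, τ ξ ζ = ξ) :
    Function.Bijective fun ξ ↦ (τ ξ).domRestrict (IntermediateField.extendScalars hle) := by
  have : NeZero m := .of_gt hm
  constructor
  · intro ξ ξ' h
    have heqOn : Set.EqOn ((τ ξ).restrictScalars ℚ) ((τ ξ').restrictScalars ℚ) (Hplus (m * n)) :=
      fun y hy ↦ DFunLike.congr_fun h ⟨y, hy⟩
    have hξξ' : τ ξ ζ = τ ξ' ζ :=
      apply_eq_of_eqOn hm hmn hω hζ.pow_eq_one (hτω ξ) (hτω ξ') heqOn
    rwa [hτζ, hτζ, SetLike.coe_eq_coe] at hξξ'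
  · intro t
    have : Normal (Hplus m) Qbar := .tower_top_of_normal ℚ _ _
    let σ : Qbar →ₐ[Hplus m] Qbar := t.liftNormal Qbar
    obtain ⟨ξ, hξ, h⟩ := exists_isPrimitiveRoot_forall_eqOn hmn hω hζ
      (σ := σ.restrictScalars ℚ) fun y hy ↦ σ.commutes ⟨y, hy⟩
    let ξ' : primitiveRoots n Qbar := ⟨ξ, (mem_primitiveRoots (NeZero.pos n)).mpr hξ⟩
    refine ⟨ξ', AlgHom.ext fun y ↦ ?_⟩
    calc τ ξ' y = σ y := (h ((τ ξ').restrictScalars ℚ) (hτω ξ') (hτζ ξ') y.2).symm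
      _ = t y := t.liftNormal_commutes Qbar y

end Embeddings

end Hplus

/-- Axiom (E1) of an Euler system, for the values at the `n`-th roots of unity only: the functions
for which `f (ζ * η)` has a norm given by a product over primitive roots of unity. The values of `f`
elsewhere are arbitrary. -/
structure IsEvenEquivariantOn (n : ℕ) (f : Qbar → Qbar) : Prop where
  map_algEquiv : ∀ σ : Qbar ≃ₐ[ℚ] Qbar, ∀ x : Qbar, x ^ n = 1 → f (σ x) = σ (f x)
  map_inv : ∀ x : Qbar, x ^ n = 1 → f x⁻¹ = f x

namespace IsEvenEquivariantOn

variable {m n : ℕ} {f : Qbar → Qbar}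

theorem of_dvd (hf : IsEvenEquivariantOn n f) (h : m ∣ n) : IsEvenEquivariantOn m f where
  map_algEquiv σ x hx := hf.map_algEquiv σ x (pow_eq_one_of_dvd h hx)
  map_inv x hx := hf.map_inv x (pow_eq_one_of_dvd h hx)

theorem mem_Hplus (hf : IsEvenEquivariantOn n f) {x : Qbar} (hx : x ^ n = 1) :
    f x ∈ Hplus n := by
  rw [← InfiniteGalois.fixedField_fixingSubgroup (Hplus n), IntermediateField.mem_fixedField_iff]
  intro σ hσ
  have hfix : Set.EqOn (σ : Qbar →ₐ[ℚ] Qbar) (AlgHom.id ℚ Qbar) (Hplus n) :=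
    (IntermediateField.mem_fixingSubgroup_iff _ _).mp hσ
  rw [← hf.map_algEquiv σ x hx]
  rcases Hplus.apply_eq_or_eq_inv hfix hx with h | h
  · exact congrArg f h
  · exact (congrArg f h).trans (hf.map_inv x hx)

theorem norm_eq_prod_primitiveRoots [NeZero n] (hf : IsEvenEquivariantOn (m * n) f)
    (hm : 2 < m) (hmn : m.Coprime n) {η ζ : Qbar} (hη : η ^ m = 1) (hζ : IsPrimitiveRoot ζ n)
    (hle : Hplus m ≤ Hplus (m * n)) (hmem : f (ζ * η) ∈ IntermediateField.extendScalars hle) :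
    (Algebra.norm (Hplus m) (⟨f (ζ * η), hmem⟩ : IntermediateField.extendScalars hle) : Qbar) =
      ∏ ξ ∈ primitiveRoots n Qbar, f (ξ * η) := by
  have : NeZero m := .of_gt hm
  obtain ⟨ω, hω⟩ := HasEnoughRootsOfUnity.exists_primitiveRoot Qbar m
  choose τ hτω hτζ using fun ξ : primitiveRoots n Qbar ↦
    Hplus.exists_algEquiv_apply_eq hmn hω hζ (isPrimitiveRoot_of_mem_primitiveRoots ξ.2)
  have hτη (ξ : primitiveRoots n Qbar) : τ ξ η = η := by
    obtain ⟨k, -, rfl⟩ := hω.eq_pow_of_pow_eq_one hη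
    rw [map_pow, hτω]
  have hζη : (ζ * η) ^ (m * n) = 1 :=
    mul_comm η ζ ▸ mul_pow_mul_eq_one hη hζ.pow_eq_one
  have : FiniteDimensional ℚ (IntermediateField.extendScalars hle) :=
    inferInstanceAs (FiniteDimensional ℚ (Hplus (m * n)))
  have : FiniteDimensional (Hplus m) (IntermediateField.extendScalars hle) := .right ℚ _ _
  calc _ = ∏ ξ, τ ξ (f (ζ * η)) := norm_eq_prod_of_bijective_domRestrict
        (Hplus.bijective_domRestrict hm hmn hω hζ hle (τ := fun ξ ↦ τ ξ) hτω hτζ) _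
    _ = ∏ ξ : primitiveRoots n Qbar, f (ξ * η) := Finset.prod_congr rfl fun ξ _ ↦ by
        rw [← hτζ ξ, ← hτη ξ, ← map_mul, hτη ξ]
        exact (hf.map_algEquiv ((τ ξ).restrictScalars ℚ) _ hζη).symm
    _ = ∏ ξ ∈ primitiveRoots n Qbar, f (ξ * η) :=
        Finset.prod_coe_sort (primitiveRoots n Qbar) fun ξ ↦ f (ξ * η)

end IsEvenEquivariantOn

theorem norm_euler_system_value_general {φ : Qbar → Qbar} {m p : ℕ} (hm : 2 < m) (hp : p.Prime)
    (hpm : ¬ p ∣ m) (hφ : IsEvenEquivariantOn (m * p) φ) {η : Qbar} (hη : η ^ m = 1)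
    (hφη : φ η ≠ 0) (hnorm : (∏ᶠ (ζ : Qbar) (_ : ζ ^ p = 1), φ (ζ * η)) = φ (η ^ p))
    {ζ : Qbar} (hζ : IsPrimitiveRoot ζ p) :
    ∃ (h1 : φ (ζ * η) ∈ Hplus (m * p)) (_h2 : φ η ∈ Hplus m)
      (hle : Hplus m ≤ Hplus (m * p)),
      ((Algebra.norm ↥(Hplus m)
          (⟨φ (ζ * η), (IntermediateField.mem_extendScalars hle).mpr h1⟩ :
            ↥(IntermediateField.extendScalars hle)) : ↥(Hplus m)) : Qbar)
        = φ (η ^ p) / φ η := by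
  have : NeZero p := ⟨hp.ne_zero⟩
  have hmp : m.Coprime p := (hp.coprime_iff_not_dvd.mpr hpm).symm
  have hζη : (ζ * η) ^ (m * p) = 1 :=
    mul_comm η ζ ▸ mul_pow_mul_eq_one hη hζ.pow_eq_one
  refine ⟨hφ.mem_Hplus hζη, (hφ.of_dvd (dvd_mul_right m p)).mem_Hplus hη,
    Hplus.le_of_dvd (dvd_mul_right m p), ?_⟩
  rw [hφ.norm_eq_prod_primitiveRoots hm hmp hη hζ, ← hnorm,
    finprod_mem_pow_eq_one_of_prime hp fun ξ ↦ φ (ξ * η), one_mul, mul_div_cancel_right₀ _ hφη]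

namespace IsEulerSystem

variable {S : Finset ℕ} {φ : Qbar → Qbar}

theorem coprime_mul (hφ : IsEulerSystem S φ) {m p : ℕ} (hmS : ∀ q ∈ S, Nat.Coprime m q)
    (hp : p.Prime) (hpS : p ∉ S) : ∀ q ∈ S, Nat.Coprime (m * p) q := fun q hq ↦
  have hpq : p ≠ q := (ne_of_mem_of_not_mem hq hpS).symm
  (hmS q hq).mul_left ((Nat.coprime_primes hp (hφ.prime_mem q hq)).mpr hpq)

theorem isEvenEquivariantOn (hφ : IsEulerSystem S φ) {n : ℕ} (hn : 0 < n)
    (hnS : ∀ q ∈ S, Nat.Coprime n q) : IsEvenEquivariantOn n φ where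
  map_algEquiv σ x hx := hφ.galois_equivariant σ x ⟨n, hn, hnS, hx⟩
  map_inv x hx := hφ.map_inv x ⟨n, hn, hnS, hx⟩

end IsEulerSystem

open IntermediateField in
/-- Proposition 2.1. For an Euler system `φ` for `S`, `η ∈ μ_m` with
`η ≠ 1` (`m` coprime to `S`), a prime `p ∤ m`, `p ∉ S`, and `ζ` a primitive `p`-th root
of unity: `φ(ζη) ∈ H_{mp}`, `φ(η) ∈ H_m`, and
`N_{H_{mp}/H_m}(φ(ζη)) = φ(η^p)/φ(η) ( = φ(η)^{Frob_p - 1})`. -/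
theorem norm_euler_system_value
    (S : Finset ℕ) (φ : Qbar → Qbar) (hφ : IsEulerSystem S φ)
    (m : ℕ) (hm : 1 ≤ m) (hmS : ∀ q ∈ S, Nat.Coprime m q)
    (η : Qbar) (hη : η ^ m = 1) (hη1 : η ≠ 1)
    (p : ℕ) (hp : p.Prime) (hpm : ¬ p ∣ m) (hpS : p ∉ S)
    (ζ : Qbar) (hζ : IsPrimitiveRoot ζ p) :
    ∃ (h1 : φ (ζ * η) ∈ Hplus (m * p)) (_h2 : φ η ∈ Hplus m)
      (hle : Hplus m ≤ Hplus (m * p)),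
      ((Algebra.norm ↥(Hplus m)
          (⟨φ (ζ * η), (IntermediateField.mem_extendScalars hle).mpr h1⟩ :
            ↥(IntermediateField.extendScalars hle)) : ↥(Hplus m)) : Qbar)
        = φ (η ^ p) / φ η := by
  have hηS : η ∈ WS S := ⟨m, hm, hmS, hη⟩
  exact norm_euler_system_value_general
    (two_lt_of_pow_eq_one_of_coprime_two hm (hmS 2 hφ.two_mem) hη hη1) hp hpm
    (hφ.isEvenEquivariantOn (Nat.mul_pos hm hp.pos) (hφ.coprime_mul hmS hp hpS)) hη
    (hφ.ne_zero η hηS) (hφ.norm_relation p hp hpS η hηS) hζ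
end
end

section
/- (Proposition 2.3) Let φ be an Euler system for S. Then for every η ∈ W_S with η ≠ 1, φ(η) is a unit in the ring of integers of the real cyclotomic field ℚ(η)⁺; in particular φ(η) is an algebraic unit. -/
open scoped BigOperators

noncomputable section

/-!
Let `p` divide the order of `η`. The norm relations make `φ(η)` the norm of `φ(θ)` from
`ℚ(θ)` to `ℚ(η)` for every `θ` with `θ ^ (p ^ j) = η`. At a place `v ∤ p` of `ℚ(η)` the residue
degree of `ℚ(θ)/ℚ(η)` divides `v(φ(η))`; it is unbounded as `j` grows, because the residue fields
contain more and more `p`-power roots of unity, so `v(φ(η)) = 0`. If the order of `η` is divisible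
by two primes, this covers every place. If it is a power of `p`, exactly one place of `ℚ(η)` lies
above `p`, and there the product formula applies, since the norm relations also give
`N_{ℚ(η)/ℚ} φ(η) = 1`.
-/

section RelativeNorm
open Ideal IsDedekindDomain WithZero
open scoped nonZeroDivisors

variable {A B K L : Type*} [CommRing A] [CommRing B] [IsDedekindDomain A] [IsDedekindDomain B]
  [Algebra A B] [Module.Finite A B] [Module.IsTorsionFree A B]
  [Field K] [Field L] [Algebra A K] [IsFractionRing A K] [Algebra B L] [IsFractionRing B L]
  [Algebra K L] [Algebra A L] [IsScalarTower A K L] [IsScalarTower A B L]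
  {v : HeightOneSpectrum A} {d : ℕ}

variable (K) in
lemma dvd_count_relNorm [PerfectField (FractionRing A)]
    (hd : ∀ P : Ideal B, P.IsMaximal → P.LiesOver v.asIdeal → d ∣ P.inertiaDeg A)
    (I : Ideal B) : (d : ℤ) ∣ FractionalIdeal.count K v (relNorm A I : FractionalIdeal A⁰ K) := by
  induction I using UniqueFactorizationMonoid.induction_on_prime with
  | h₁ => simp [FractionalIdeal.count_zero]
  | h₂ u hu => simp [isUnit_iff_eq_one.mp hu, -isUnit_iff, FractionalIdeal.count_one]
  | h₃ I P hI hP ih =>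
    have hPmax : P.IsMaximal := (isPrime_of_prime hP).isMaximal hP.ne_zero
    have : (P.under A).IsMaximal := IsMaximal.under A P
    let w : HeightOneSpectrum A := ⟨P.under A, inferInstance, under_ne_bot A hP.ne_zero⟩
    have hnorm : (relNorm A P : FractionalIdeal A⁰ K) =
        (w.asIdeal : FractionalIdeal A⁰ K) ^ P.inertiaDeg A := by
      rw [relNorm_eq_pow_of_isMaximal P (P.under A), FractionalIdeal.coeIdeal_pow]
    have hne : ∀ {J : Ideal B}, J ≠ 0 → (relNorm A J : FractionalIdeal A⁰ K) ≠ 0 := fun hJ ↦ by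
      simpa [relNorm_eq_bot_iff] using hJ
    rw [map_mul, FractionalIdeal.coeIdeal_mul,
      FractionalIdeal.count_mul K v (hne hP.ne_zero) (hne hI)]
    refine dvd_add ?_ ih
    classical
    rw [hnorm, FractionalIdeal.count_pow, FractionalIdeal.count_maximal]
    split_ifs with hwv
    · have hPv : P.LiesOver v.asIdeal := ⟨congrArg HeightOneSpectrum.asIdeal hwv.symm⟩
      simpa using Int.natCast_dvd_natCast.mpr (hd P hPmax hPv)
    · simp

lemma log_valuation_algebraMap (v : HeightOneSpectrum A) {a : A} (ha : a ≠ 0) :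
    log (v.valuation K (algebraMap A K a)) =
      -FractionalIdeal.count K v (span {a} : FractionalIdeal A⁰ K) := by
  rw [HeightOneSpectrum.valuation_of_algebraMap, HeightOneSpectrum.intValuation_if_neg _ ha,
    log_exp, FractionalIdeal.count_coe K v (by simpa using ha)]

lemma dvd_log_valuation_norm [FiniteDimensional K L] [PerfectField (FractionRing A)]
    (hd : ∀ P : Ideal B, P.IsMaximal → P.LiesOver v.asIdeal → d ∣ P.inertiaDeg A) (y : L) :
    (d : ℤ) ∣ log (v.valuation K (Algebra.norm K y)) := by
  have hint (b : B) (hb : b ≠ 0) :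
      (d : ℤ) ∣ log (v.valuation K (Algebra.norm K (algebraMap B L b))) := by
    rw [← Algebra.algebraMap_intNorm (A := A), log_valuation_algebraMap v (by simpa using hb),
      dvd_neg, ← relNorm_singleton]
    exact dvd_count_relNorm K hd _
  obtain ⟨a, b, hb, rfl⟩ := IsFractionRing.div_surjective (A := B) y
  obtain rfl | ha := eq_or_ne a 0
  · simp
  have hne {c : B} (hc : c ≠ 0) : v.valuation K (Algebra.norm K (algebraMap B L c)) ≠ 0 := by
    simpa [Algebra.norm_eq_zero_iff] using hc
  have hb0 := nonZeroDivisors.ne_zero hb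
  rw [div_eq_mul_inv, map_mul, Algebra.norm_inv, map_mul, map_inv₀,
    log_mul (hne ha) (inv_ne_zero (hne hb0)), log_inv]
  exact dvd_add (hint a ha) ((hint b hb0).neg_right)
end RelativeNorm

section NumberField
open NumberField Ideal IsDedekindDomain WithZero

lemma liesOver_span_of_dvd_absNorm {R : Type*} [CommRing R] [IsDedekindDomain R] [Module.Free ℤ R]
    [Module.Finite ℤ R] {p : ℕ} (hp : p.Prime) (P : Ideal R) [P.IsPrime] [NeZero P]
    (hdvd : p ∣ absNorm P) : P.LiesOver (span {(p : ℤ)}) := by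
  have hq := Nat.absNorm_under_prime P
  rw [← pow_inertiaDeg (absNorm (under ℤ P)) P] at hdvd
  rw [(Nat.prime_dvd_prime_iff_eq hp hq).mp (hp.dvd_of_dvd_pow hdvd)]
  infer_instance

variable {K L : Type*} [Field K] [Field L] [NumberField K] [NumberField L] [Algebra K L]
  {v : HeightOneSpectrum (𝓞 K)}

lemma dvd_absNorm_sub_one_of_isPrimitiveRoot {m : ℕ} [NeZero m] {ζ : K} (hζ : IsPrimitiveRoot ζ m)
    {P : Ideal (𝓞 K)} [P.IsMaximal] (hP : (absNorm P).Coprime m) : m ∣ absNorm P - 1 := by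
  have hP1 : absNorm P ≠ 1 := absNorm_eq_one_iff.not.mpr (IsMaximal.ne_top ‹_›)
  have hmk := hζ.toInteger_isPrimitiveRoot.idealQuotient_mk hP1 hP
  rw [(hmk.isUnit_unit (NeZero.ne m)).eq_orderOf]
  let := Quotient.field P
  exact (orderOf_dvd_natCard _).trans (Nat.card_units (𝓞 K ⧸ P)).dvd

lemma valuation_norm_eq_one_of_isPrimitiveRoot [IsGalois K L] {m : ℕ} [NeZero m] {ζ : L}
    (hζ : IsPrimitiveRoot ζ m) (hm : (absNorm v.asIdeal).Coprime m) {y : L} (hy : y ≠ 0)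
    (hle : absNorm v.asIdeal ^ (log (v.valuation K (Algebra.norm K y))).natAbs ≤ m) :
    v.valuation K (Algebra.norm K y) = 1 := by
  obtain ⟨P, hPmax, hPv⟩ := exists_maximal_ideal_liesOver_of_isIntegral (S := 𝓞 L) v.asIdeal
  have hdvd : (P.inertiaDeg (𝓞 K) : ℤ) ∣ log (v.valuation K (Algebra.norm K y)) :=
    dvd_log_valuation_norm (B := 𝓞 L) (fun Q _ _ ↦
      (inertiaDeg_eq_of_isGaloisGroup v.asIdeal P Q Gal(L/K)).dvd) y
  have hcard : absNorm P = absNorm v.asIdeal ^ P.inertiaDeg (𝓞 K) :=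
    (absNorm_pow_inertiaDeg v.asIdeal P).symm
  have hv1 : 1 < absNorm v.asIdeal := HeightOneSpectrum.one_lt_absNorm v
  have hlt : m < absNorm v.asIdeal ^ P.inertiaDeg (𝓞 K) := by
    have hP1 : 1 < absNorm P := hcard ▸ Nat.one_lt_pow (P.inertiaDeg_pos (𝓞 K)).ne' hv1
    have hmP := dvd_absNorm_sub_one_of_isPrimitiveRoot hζ (P := P) (hcard ▸ hm.pow_left _)
    have := Nat.le_of_dvd (by lia) hmP
    lia
  have hlog : log (v.valuation K (Algebra.norm K y)) = 0 :=
    Int.eq_zero_of_dvd_of_natAbs_lt_natAbs hdvd <| by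
      simpa using (Nat.pow_lt_pow_iff_right hv1).mp (hle.trans_lt hlt)
  have hne : v.valuation K (Algebra.norm K y) ≠ 0 := by simpa [Algebra.norm_eq_zero_iff] using hy
  rw [← exp_log hne, hlog, exp_zero]

lemma valuation_eq_one_of_abs_norm_eq_one {x : K} (hx : |Algebra.norm ℚ x| = 1)
    (h : ∀ w ≠ v, w.valuation K x = 1) : v.valuation K x = 1 := by
  have hx0 : x ≠ 0 := by rintro rfl; simp at hx
  have hprod := FinitePlace.prod_eq_inv_abs_norm hx0
  rw [hx, ← finprod_comp_equiv FinitePlace.equivHeightOneSpectrum.symm] at hprod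
  simp only [FinitePlace.equivHeightOneSpectrum_symm_apply, FinitePlace.norm_embedding'] at hprod
  rw [finprod_eq_single _ v fun w hw ↦ by simp [h w hw]] at hprod
  rw [inv_one, Rat.cast_one, NNReal.coe_eq_one] at hprod
  exact (WithZeroMulInt.toNNReal_eq_one_iff _ _
    (HeightOneSpectrum.one_lt_absNorm_nnreal v).ne').mp hprod

lemma eq_of_dvd_absNorm_of_isCyclotomicExtension {p k : ℕ} (hp : p.Prime)
    [hK : IsCyclotomicExtension {p ^ (k + 1)} ℚ K] {w : HeightOneSpectrum (𝓞 K)}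
    (hv : p ∣ absNorm v.asIdeal) (hw : p ∣ absNorm w.asIdeal) : v = w := by
  have : Fact p.Prime := ⟨hp⟩
  have : NeZero v.asIdeal := ⟨v.ne_bot⟩
  have : NeZero w.asIdeal := ⟨w.ne_bot⟩
  have hvp := liesOver_span_of_dvd_absNorm hp v.asIdeal hv
  have hwp := liesOver_span_of_dvd_absNorm hp w.asIdeal hw
  have hζ := IsCyclotomicExtension.zeta_spec (p ^ (k + 1)) ℚ K
  apply HeightOneSpectrum.ext
  rw [IsCyclotomicExtension.Rat.eq_span_zeta_sub_one_of_liesOver p k K hζ v.asIdeal,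
    IsCyclotomicExtension.Rat.eq_span_zeta_sub_one_of_liesOver p k K hζ w.asIdeal]

lemma isIntegral_of_valuation_le_one {x : K}
    (h : ∀ v : HeightOneSpectrum (𝓞 K), v.valuation K x ≤ 1) : IsIntegral ℤ x := by
  obtain ⟨a, rfl⟩ := HeightOneSpectrum.mem_integers_of_valuation_le_one K x h
  exact a.isIntegral_coe
end NumberField


section RootsOfUnity
open Polynomial

lemma isPrimitiveRoot_mul_of_pow {M : Type*} [CommMonoid M] {k n : ℕ} {x : M} (hk : k ∣ n)
    (hx : IsPrimitiveRoot (x ^ k) n) : IsPrimitiveRoot x (k * n) where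
  pow_eq_one := by rw [pow_mul, hx.pow_eq_one]
  dvd_of_pow_eq_one l hl := by
    have hn : n ∣ l := hx.dvd_of_pow_eq_one l (by rw [pow_right_comm, hl, one_pow])
    obtain ⟨m, rfl⟩ := hk.trans hn
    exact mul_dvd_mul_left k (hx.dvd_of_pow_eq_one m (by rw [← pow_mul, hl]))

lemma isPrimitiveRoot_pow_mul_of_pow {M : Type*} [CommMonoid M] {k n : ℕ} (hk : k ∣ n) (j : ℕ)
    {x : M} (hx : IsPrimitiveRoot (x ^ k ^ j) n) : IsPrimitiveRoot x (k ^ j * n) := by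
  induction j generalizing x with
  | zero => simpa using hx
  | succ j ih =>
    rw [pow_succ', mul_assoc]
    refine isPrimitiveRoot_mul_of_pow (hk.mul_left _) (ih ?_)
    rwa [← pow_mul, ← pow_succ']

variable {R M : Type*} [CommRing R] [IsDomain R] [CommMonoid M] (f : R → M)

lemma prod_nthRootsFinset_prime_pow_succ {p : ℕ} (hp : p.Prime) (k : ℕ) :
    ∏ x ∈ nthRootsFinset (p ^ (k + 1)) (1 : R), f x =
      (∏ x ∈ nthRootsFinset (p ^ k) (1 : R), f x) * ∏ x ∈ primitiveRoots (p ^ (k + 1)) R, f x := by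
  classical
  have : Fact p.Prime := ⟨hp⟩
  have hpos (i : ℕ) : 0 < p ^ i := pow_pos hp.pos i
  have hroot (x : R) : x ∈ nthRootsFinset (p ^ (k + 1)) (1 : R) ↔
      x ∈ nthRootsFinset (p ^ k) (1 : R) ∨ x ∈ primitiveRoots (p ^ (k + 1)) R := by
    simp only [mem_nthRootsFinset (hpos _), mem_primitiveRoots (hpos _)]
    refine ⟨fun hx ↦ or_iff_not_imp_left.mpr fun hxk ↦ ?_, ?_⟩
    · exact orderOf_eq_prime_pow hxk hx ▸ IsPrimitiveRoot.orderOf x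
    · rintro (hx | hx)
      · rw [pow_succ, pow_mul, hx, one_pow]
      · exact hx.pow_eq_one
  have hdisj : Disjoint (nthRootsFinset (p ^ k) (1 : R)) (primitiveRoots (p ^ (k + 1)) R) := by
    refine Finset.disjoint_left.mpr fun x hx hx' ↦ ?_
    rw [mem_nthRootsFinset (hpos _)] at hx
    exact (Nat.pow_lt_pow_right hp.one_lt k.lt_succ_self).not_ge
      (Nat.le_of_dvd (hpos _) ((isPrimitiveRoot_of_mem_primitiveRoots hx').dvd_of_pow_eq_one _ hx))
  rw [← Finset.prod_union hdisj]
  exact Finset.prod_congr (by ext x; simp [hroot]) fun _ _ ↦ rfl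

lemma prod_nthRootsFinset_mul_right {K : Type*} [Field K] (f : K → M) {n : ℕ} {a : K} (ha : a ≠ 0) :
    ∏ ζ ∈ nthRootsFinset n (1 : K), f (ζ * a) = ∏ x ∈ nthRootsFinset n (a ^ n), f x := by
  obtain rfl | hn := n.eq_zero_or_pos
  · simp
  refine Finset.prod_nbij' (· * a) (· / a) ?_ ?_ ?_ ?_ ?_
  · simp +contextual [mem_nthRootsFinset hn, mul_pow]
  · simp +contextual [mem_nthRootsFinset hn, div_pow, ha]
  all_goals simp [ha]

lemma prod_nthRootsFinset_mul {m n : ℕ} (hm : 0 < m) (hn : 0 < n) (a : R) :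
    ∏ x ∈ nthRootsFinset (m * n) a, f x =
      ∏ y ∈ nthRootsFinset m a, ∏ x ∈ nthRootsFinset n y, f x := by
  classical
  rw [← Finset.prod_fiberwise_of_maps_to (g := (· ^ n)) (t := nthRootsFinset m a)]
  · refine Finset.prod_congr rfl fun y hy ↦ Finset.prod_congr ?_ fun _ _ ↦ rfl
    rw [mem_nthRootsFinset hm] at hy
    ext x
    simp only [Finset.mem_filter, mem_nthRootsFinset (mul_pos hm hn), mem_nthRootsFinset hn,
      and_iff_right_iff_imp]
    rintro rfl
    rw [mul_comm, pow_mul, hy]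
  · simp [mem_nthRootsFinset (mul_pos hm hn), mem_nthRootsFinset hm, ← pow_mul, mul_comm n m]

lemma exists_algEquiv_of_isPrimitiveRoot {F E : Type*} [Field F] [Field E] [Algebra F E]
    [Normal F E] {n : ℕ} [NeZero (n : F)] (hn : Irreducible (cyclotomic n F)) {x y : E}
    (hx : IsPrimitiveRoot x n) (hy : IsPrimitiveRoot y n) : ∃ σ : E ≃ₐ[F] E, σ x = y := by
  have hconj : IsConjRoot F y x := by
    rw [isConjRoot_def, ← hx.minpoly_eq_cyclotomic_of_irreducible hn,
      ← hy.minpoly_eq_cyclotomic_of_irreducible hn]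
  exact isConjRoot_iff_exists_algEquiv.mp hconj

end RootsOfUnity

section GaloisEquivariance
open IntermediateField

variable {F E : Type*} [Field F] [Field E] [Algebra F E]

lemma exists_algEquiv_adjoin_simple {a : E} {σ : E ≃ₐ[F] E} (h : σ a = a) :
    ∃ τ : E ≃ₐ[F⟮a⟯] E, ∀ x, τ x = σ x := by
  have hfix : σ.toAlgHom.comp F⟮a⟯.val = F⟮a⟯.val := adjoin_algHom_ext F (by rintro _ rfl; exact h)
  exact ⟨AlgEquiv.ofRingEquiv (f := σ.toRingEquiv) (DFunLike.congr_fun hfix), fun _ ↦ rfl⟩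

variable [IsGalois F E]

lemma mem_adjoin_simple_of_forall_algEquiv {a x : E}
    (h : ∀ σ : E ≃ₐ[F] E, σ a = a → σ x = x) : x ∈ F⟮a⟯ := by
  rw [← InfiniteGalois.fixedField_fixingSubgroup F⟮a⟯, mem_fixedField_iff]
  exact fun σ hσ ↦ h σ ((mem_fixingSubgroup_iff _ σ).mp hσ a (mem_adjoin_simple_self F a))

lemma algebraMap_norm_eq_prod_orbit [IsAlgClosed E] {f : E → E} {θ : E}
    (hf : ∀ σ : E ≃ₐ[F] E, f (σ θ) = σ (f θ)) {y : F⟮θ⟯} (hy : (y : E) = f θ)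
    {s : Finset E} (hs : ∀ x, x ∈ s ↔ ∃ σ : E ≃ₐ[F] E, σ θ = x) :
    algebraMap F E (Algebra.norm F y) = ∏ x ∈ s, f x := by
  have := adjoin.finiteDimensional (Algebra.IsIntegral.isIntegral (R := F) θ)
  have hext (τ : F⟮θ⟯ →ₐ[F] E) : ∃ σ : E ≃ₐ[F] E, ∀ z : F⟮θ⟯, σ z = τ z := by
    obtain ⟨σ, rfl⟩ := IsAlgClosed.surjective_domRestrict_of_isAlgebraic (E := E) τ
    exact ⟨(Algebra.IsAlgebraic.algEquivEquivAlgHom F E).symm σ, fun _ ↦ rfl⟩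
  rw [Algebra.norm_eq_prod_embeddings F E y]
  refine Finset.prod_bij (fun τ _ ↦ τ (AdjoinSimple.gen F θ)) ?_ ?_ ?_ ?_
  · intro τ _
    obtain ⟨σ, hσ⟩ := hext τ
    exact (hs _).mpr ⟨σ, hσ (AdjoinSimple.gen F θ)⟩
  · exact fun τ _ τ' _ h ↦ adjoin_algHom_ext F (by rintro _ rfl; exact h)
  · intro x hx
    obtain ⟨σ, rfl⟩ := (hs x).mp hx
    exact ⟨σ.toAlgHom.comp F⟮θ⟯.val, Finset.mem_univ _, rfl⟩
  · intro τ _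
    obtain ⟨σ, hσ⟩ := hext τ
    rw [← hσ y, ← hσ, hy, ← hf]
    rfl

end GaloisEquivariance


instance : Algebra.IsAlgebraic ℚ Qbar := AlgebraicClosure.isAlgebraic ℚ

instance : IsGalois ℚ Qbar where
  to_normal := ⟨fun _ ↦ IsAlgClosed.splits _⟩

section NormCompatible
open IntermediateField NumberField Ideal IsDedekindDomain Polynomial

instance (η : Qbar) : NumberField ℚ⟮η⟯ where
  to_finiteDimensional := adjoin.finiteDimensional (Algebra.IsIntegral.isIntegral η)

variable {S : Finset ℕ} {φ : Qbar → Qbar} {η : Qbar}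

lemma ne_zero_of_mem_WS (hη : η ∈ WS S) : η ≠ 0 := by
  rintro rfl
  obtain ⟨n, hn, -, h0⟩ := hη
  simp [hn.ne'] at h0

lemma orderOf_pos_of_mem_WS (hη : η ∈ WS S) : 0 < orderOf η := by
  obtain ⟨n, hn, -, h1⟩ := hη
  exact orderOf_pos_iff.mpr (isOfFinOrder_iff_pow_eq_one.mpr ⟨n, hn, h1⟩)

lemma coprime_orderOf_of_mem_WS (hη : η ∈ WS S) {q : ℕ} (hq : q ∈ S) : (orderOf η).Coprime q := by
  obtain ⟨n, -, hn, h1⟩ := hη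
  exact (hn q hq).coprime_dvd_left (orderOf_dvd_of_pow_eq_one h1)

lemma notMem_of_dvd_orderOf (hη : η ∈ WS S) {p : ℕ} (hp : p.Prime) (hpη : p ∣ orderOf η) :
    p ∉ S := fun hpS ↦
  (hp.coprime_iff_not_dvd.mp (coprime_orderOf_of_mem_WS hη hpS).symm) hpη

lemma one_mem_WS : (1 : Qbar) ∈ WS S := ⟨1, one_pos, fun q _ ↦ q.coprime_one_left, one_pow 1⟩

lemma mem_WS_of_pow_mem {k : ℕ} (hk : 0 < k) (hkS : ∀ q ∈ S, k.Coprime q) (h : η ^ k ∈ WS S) :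
    η ∈ WS S := by
  obtain ⟨n, hn, hnS, h1⟩ := h
  exact ⟨k * n, by positivity, fun q hq ↦ (hkS q hq).mul_left (hnS q hq), by rw [pow_mul, h1]⟩

/-- A norm-compatible system for `S`: an Euler system stripped of the parity condition in (E1), of
the congruences (E3) and of `2 ∈ S`. The product in (E2) is written over a `Finset`. -/
structure IsNormCompatible (S : Finset ℕ) (φ : Qbar → Qbar) : Prop where
  prime_mem : ∀ q ∈ S, Nat.Prime q
  ne_zero : ∀ η ∈ WS S, φ η ≠ 0
  galois_equivariant : ∀ σ : Qbar ≃ₐ[ℚ] Qbar, ∀ η ∈ WS S, φ (σ η) = σ (φ η)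
  norm_relation : ∀ p : ℕ, p.Prime → p ∉ S → ∀ η ∈ WS S,
    ∏ ζ ∈ nthRootsFinset p (1 : Qbar), φ (ζ * η) = φ (η ^ p)

lemma IsEulerSystem.isNormCompatible (hφ : IsEulerSystem S φ) : IsNormCompatible S φ where
  prime_mem := hφ.prime_mem
  ne_zero := hφ.ne_zero
  galois_equivariant := hφ.galois_equivariant
  norm_relation p hp hpS η hη := by
    rw [← hφ.norm_relation p hp hpS η hη, finprod_cond_eq_prod_of_cond_iff]
    exact fun _ ↦ (mem_nthRootsFinset hp.pos _).symm

namespace IsNormCompatible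

lemma mem_WS_of_pow_prime_pow_mem (hφ : IsNormCompatible S φ) {p : ℕ} (hp : p.Prime)
    (hpS : p ∉ S) {j : ℕ} (h : η ^ p ^ j ∈ WS S) : η ∈ WS S := by
  refine mem_WS_of_pow_mem (pow_pos hp.pos j) (fun q hq ↦ .pow_left j ?_) h
  exact (Nat.coprime_primes hp (hφ.prime_mem q hq)).mpr (ne_of_mem_of_not_mem hq hpS).symm

lemma prod_nthRootsFinset (hφ : IsNormCompatible S φ) {p : ℕ} (hp : p.Prime) (hpS : p ∉ S)
    (hη : η ∈ WS S) : ∏ x ∈ nthRootsFinset p η, φ x = φ η := by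
  obtain ⟨θ, rfl⟩ := IsAlgClosed.exists_pow_nat_eq η hp.pos
  have hθ : θ ∈ WS S := hφ.mem_WS_of_pow_prime_pow_mem hp hpS (j := 1) (by rwa [pow_one])
  rw [← prod_nthRootsFinset_mul_right φ (ne_zero_of_mem_WS hθ), hφ.norm_relation p hp hpS θ hθ]

lemma prod_nthRootsFinset_pow (hφ : IsNormCompatible S φ) {p : ℕ} (hp : p.Prime) (hpS : p ∉ S)
    (hη : η ∈ WS S) (j : ℕ) : ∏ x ∈ nthRootsFinset (p ^ j) η, φ x = φ η := by
  induction j with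
  | zero =>
    have : nthRootsFinset (p ^ 0) η = {η} := by ext x; simp [mem_nthRootsFinset]
    rw [this, Finset.prod_singleton]
  | succ j ih =>
    have hpj := pow_pos hp.pos j
    rw [pow_succ, prod_nthRootsFinset_mul φ hpj hp.pos, ← ih]
    refine Finset.prod_congr rfl fun y hy ↦ hφ.prod_nthRootsFinset hp hpS ?_
    rw [mem_nthRootsFinset hpj] at hy
    exact hφ.mem_WS_of_pow_prime_pow_mem hp hpS (hy ▸ hη)

lemma apply_mem_adjoin_simple (hφ : IsNormCompatible S φ) (F : Type*) [Field F] [Algebra ℚ F]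
    [Algebra F Qbar] [IsScalarTower ℚ F Qbar] (hη : η ∈ WS S) : φ η ∈ F⟮η⟯ := by
  have := IsGalois.tower_top_of_isGalois ℚ F Qbar
  exact mem_adjoin_simple_of_forall_algEquiv fun σ hσ ↦
    (hφ.galois_equivariant (σ.restrictScalars ℚ) η hη).symm.trans (congrArg φ hσ)

lemma apply_mem_adjoin_add_inv (hφ : IsNormCompatible S φ) (hη : η ∈ WS S)
    (hinv : φ η⁻¹ = φ η) : φ η ∈ ℚ⟮η + η⁻¹⟯ := by
  refine mem_adjoin_simple_of_forall_algEquiv fun σ hσ ↦ ?_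
  have h0 : η ≠ 0 := ne_zero_of_mem_WS hη
  have hση0 : σ η ≠ 0 := by simpa using h0
  have hση : (σ η - η) * (σ η - η⁻¹) = 0 := by
    rw [map_add, map_inv₀] at hσ
    field_simp at hσ ⊢
    linear_combination hσ
  rw [← hφ.galois_equivariant σ η hη]
  rcases mul_eq_zero.mp hση with h | h
  · rw [sub_eq_zero.mp h]
  · rw [sub_eq_zero.mp h, hinv]

lemma norm_eq_one (hφ : IsNormCompatible S φ) {p : ℕ} (hp : p.Prime) (hpS : p ∉ S) {k : ℕ}
    (hη : IsPrimitiveRoot η (p ^ (k + 1))) {x : ℚ⟮η⟯} (hx : (x : Qbar) = φ η) :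
    Algebra.norm ℚ x = 1 := by
  have hpos := pow_pos hp.pos (k + 1)
  have hηW : η ∈ WS S := hφ.mem_WS_of_pow_prime_pow_mem hp hpS (hη.pow_eq_one ▸ one_mem_WS)
  have : NeZero (p ^ (k + 1)) := ⟨hpos.ne'⟩
  have horbit (y : Qbar) :
      y ∈ primitiveRoots (p ^ (k + 1)) Qbar ↔ ∃ σ : Qbar ≃ₐ[ℚ] Qbar, σ η = y := by
    rw [mem_primitiveRoots hpos]
    refine ⟨exists_algEquiv_of_isPrimitiveRoot (cyclotomic.irreducible_rat hpos) hη, ?_⟩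
    rintro ⟨σ, rfl⟩
    exact hη.map_of_injective σ.injective
  have hprod := prod_nthRootsFinset_prime_pow_succ φ hp k
  rw [hφ.prod_nthRootsFinset_pow hp hpS one_mem_WS, hφ.prod_nthRootsFinset_pow hp hpS one_mem_WS,
    ← algebraMap_norm_eq_prod_orbit (fun σ ↦ hφ.galois_equivariant σ η hηW) hx horbit] at hprod
  exact (algebraMap ℚ Qbar).injective <|
    ((left_eq_mul₀ (hφ.ne_zero 1 one_mem_WS)).mp hprod).trans (map_one _).symm

lemma algebraMap_norm_eq (hφ : IsNormCompatible S φ) {p : ℕ} (hp : p.Prime) (hpη : p ∣ orderOf η)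
    (hη : η ∈ WS S) {j : ℕ} {θ : Qbar} (hθ : θ ^ p ^ j = η) {y : ℚ⟮η⟯⟮θ⟯}
    (hy : (y : Qbar) = φ θ) : algebraMap ℚ⟮η⟯ Qbar (Algebra.norm ℚ⟮η⟯ y) = φ η := by
  have hpS := notMem_of_dvd_orderOf hη hp hpη
  have hθW : θ ∈ WS S := hφ.mem_WS_of_pow_prime_pow_mem hp hpS (hθ.symm ▸ hη)
  have hpj := pow_pos hp.pos j
  have hpos : 0 < p ^ j * orderOf η := Nat.mul_pos hpj (orderOf_pos_of_mem_WS hη)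
  have : NeZero (p ^ j * orderOf η) := ⟨hpos.ne'⟩
  have hprim {x : Qbar} (hx : x ^ p ^ j = η) : IsPrimitiveRoot x (p ^ j * orderOf η) :=
    isPrimitiveRoot_pow_mul_of_pow hpη j (hx.symm ▸ IsPrimitiveRoot.orderOf η)
  have horbit (x : Qbar) :
      x ∈ nthRootsFinset (p ^ j) η ↔ ∃ σ : Qbar ≃ₐ[ℚ⟮η⟯] Qbar, σ θ = x := by
    rw [mem_nthRootsFinset hpj]
    constructor
    · intro hx
      obtain ⟨σ, rfl⟩ := exists_algEquiv_of_isPrimitiveRoot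
        (cyclotomic.irreducible_rat hpos) (hprim hθ) (hprim hx)
      have hση : σ η = η := by rw [← hθ, map_pow, hx, hθ]
      exact (exists_algEquiv_adjoin_simple hση).imp fun τ hτ ↦ hτ θ
    · rintro ⟨σ, rfl⟩
      rw [← map_pow, hθ]
      exact σ.commutes (AdjoinSimple.gen ℚ η)
  rw [algebraMap_norm_eq_prod_orbit (F := ℚ⟮η⟯)
    (fun σ ↦ hφ.galois_equivariant (σ.restrictScalars ℚ) θ hθW) hy horbit,
    hφ.prod_nthRootsFinset_pow hp hpS hη]

open WithZero in
lemma valuation_eq_one_of_coprime (hφ : IsNormCompatible S φ) {p : ℕ} (hp : p.Prime)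
    (hpη : p ∣ orderOf η) (hη : η ∈ WS S) {v : HeightOneSpectrum (𝓞 ℚ⟮η⟯)}
    (hv : (absNorm v.asIdeal).Coprime p) {x : ℚ⟮η⟯} (hx : (x : Qbar) = φ η) :
    v.valuation ℚ⟮η⟯ x = 1 := by
  let N := absNorm v.asIdeal ^ (log (v.valuation ℚ⟮η⟯ x)).natAbs
  obtain ⟨θ, hθ⟩ := IsAlgClosed.exists_pow_nat_eq η (pow_pos hp.pos N)
  have hθW : θ ∈ WS S :=
    hφ.mem_WS_of_pow_prime_pow_mem hp (notMem_of_dvd_orderOf hη hp hpη) (hθ.symm ▸ hη)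
  have : NeZero (orderOf θ) := ⟨(orderOf_pos_of_mem_WS hθW).ne'⟩
  have : NeZero (p ^ N) := ⟨(pow_pos hp.pos N).ne'⟩
  have hθprim : IsPrimitiveRoot (AdjoinSimple.gen ℚ⟮η⟯ θ) (orderOf θ) :=
    .of_map_of_injective (f := algebraMap ℚ⟮η⟯⟮θ⟯ Qbar) (IsPrimitiveRoot.orderOf θ)
      (algebraMap ℚ⟮η⟯⟮θ⟯ Qbar).injective
  have horder : orderOf θ = orderOf η * p ^ N := by
    have h : IsPrimitiveRoot θ (p ^ N * orderOf η) :=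
      isPrimitiveRoot_pow_mul_of_pow hpη N (hθ.symm ▸ IsPrimitiveRoot.orderOf η)
    rw [← h.eq_orderOf, mul_comm]
  have hζ := hθprim.pow (orderOf_pos_of_mem_WS hθW) horder
  have := (IsPrimitiveRoot.orderOf θ).intermediateField_adjoin_isCyclotomicExtension ℚ⟮η⟯
  have := IsCyclotomicExtension.isGalois {orderOf θ} ℚ⟮η⟯ ℚ⟮η⟯⟮θ⟯
  have := IsCyclotomicExtension.numberField {orderOf θ} ℚ⟮η⟯ ℚ⟮η⟯⟮θ⟯
  let y : ℚ⟮η⟯⟮θ⟯ := ⟨φ θ, hφ.apply_mem_adjoin_simple ℚ⟮η⟯ hθW⟩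
  have hy0 : y ≠ 0 := fun h ↦ hφ.ne_zero θ hθW (congrArg Subtype.val h)
  have hnorm : Algebra.norm ℚ⟮η⟯ y = x := (algebraMap ℚ⟮η⟯ Qbar).injective <| by
    rw [hφ.algebraMap_norm_eq hp hpη hη hθ rfl, ← hx]
    rfl
  rw [← hnorm]
  refine valuation_norm_eq_one_of_isPrimitiveRoot hζ (hv.pow_right N) hy0 ?_
  rw [hnorm]
  exact (Nat.lt_pow_self hp.one_lt).le

lemma valuation_eq_one_of_isPrimitiveRoot_prime_pow (hφ : IsNormCompatible S φ) {p : ℕ}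
    (hp : p.Prime) {k : ℕ} (hη : IsPrimitiveRoot η (p ^ (k + 1))) (hηW : η ∈ WS S)
    (v : HeightOneSpectrum (𝓞 ℚ⟮η⟯)) {x : ℚ⟮η⟯} (hx : (x : Qbar) = φ η) :
    v.valuation ℚ⟮η⟯ x = 1 := by
  have hpη : p ∣ orderOf η := hη.eq_orderOf ▸ dvd_pow_self p k.succ_ne_zero
  by_cases hv : (absNorm v.asIdeal).Coprime p
  · exact hφ.valuation_eq_one_of_coprime hp hpη hηW hv hx
  have : NeZero (p ^ (k + 1)) := ⟨(pow_pos hp.pos _).ne'⟩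
  have : IsCyclotomicExtension {p ^ (k + 1)} ℚ ℚ⟮η⟯ :=
    hη.intermediateField_adjoin_isCyclotomicExtension ℚ
  have hpv : p ∣ absNorm v.asIdeal := by
    rwa [Nat.coprime_comm, hp.coprime_iff_not_dvd, not_not] at hv
  refine valuation_eq_one_of_abs_norm_eq_one ?_ fun w hwv ↦
    hφ.valuation_eq_one_of_coprime hp hpη hηW ?_ hx
  · rw [hφ.norm_eq_one hp (notMem_of_dvd_orderOf hηW hp hpη) hη hx, abs_one]
  · rw [Nat.coprime_comm, hp.coprime_iff_not_dvd]
    exact fun hpw ↦ hwv (eq_of_dvd_absNorm_of_isCyclotomicExtension (k := k) hp hpw hpv)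

lemma valuation_eq_one (hφ : IsNormCompatible S φ) (hη : η ∈ WS S) (hη1 : η ≠ 1)
    (v : HeightOneSpectrum (𝓞 ℚ⟮η⟯)) {x : ℚ⟮η⟯} (hx : (x : Qbar) = φ η) :
    v.valuation ℚ⟮η⟯ x = 1 := by
  by_cases h : ∃ p, p.Prime ∧ p ∣ orderOf η ∧ (absNorm v.asIdeal).Coprime p
  · obtain ⟨p, hp, hpη, hv⟩ := h
    exact hφ.valuation_eq_one_of_coprime hp hpη hη hv hx
  have : NeZero v.asIdeal := ⟨v.ne_bot⟩
  have hq := Nat.absNorm_under_prime v.asIdeal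
  set q := absNorm (under ℤ v.asIdeal)
  have hunique {p : ℕ} (hp : p.Prime) (hpη : p ∣ orderOf η) : p = q := by
    by_contra hpq
    refine h ⟨p, hp, hpη, ?_⟩
    rw [← pow_inertiaDeg q v.asIdeal]
    exact ((Nat.coprime_primes hq hp).mpr (Ne.symm hpq)).pow_left _
  have horder := Nat.eq_prime_pow_of_unique_prime_dvd (orderOf_pos_of_mem_WS hη).ne' hunique
  obtain ⟨k, hk⟩ := Nat.exists_eq_succ_of_ne_zero
    fun h0 : (orderOf η).primeFactorsList.length = 0 ↦
      hη1 (orderOf_eq_one_iff.mp (by rw [horder, h0, pow_zero]))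
  refine hφ.valuation_eq_one_of_isPrimitiveRoot_prime_pow hq (k := k) ?_ hη v hx
  rw [← Nat.succ_eq_add_one, ← hk, ← horder]
  exact IsPrimitiveRoot.orderOf η

lemma isIntegral_apply_and_inv (hφ : IsNormCompatible S φ) (hη : η ∈ WS S) (hη1 : η ≠ 1) :
    IsIntegral ℤ (φ η) ∧ IsIntegral ℤ (φ η)⁻¹ := by
  let x : ℚ⟮η⟯ := ⟨φ η, hφ.apply_mem_adjoin_simple ℚ hη⟩
  have hval (v : HeightOneSpectrum (𝓞 ℚ⟮η⟯)) : v.valuation ℚ⟮η⟯ x = 1 :=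
    hφ.valuation_eq_one hη hη1 v rfl
  have hx : IsIntegral ℤ x := isIntegral_of_valuation_le_one fun v ↦ (hval v).le
  have hxinv : IsIntegral ℤ x⁻¹ := isIntegral_of_valuation_le_one fun v ↦ by
    rw [map_inv₀, hval, inv_one]
  exact ⟨coe_isIntegral_iff.mpr hx, coe_isIntegral_iff.mpr hxinv⟩

end IsNormCompatible
end NormCompatible

lemma exists_unit_integralClosure_of_isIntegral {R F E : Type*} [CommRing R] [Field F] [Field E]
    [Algebra R F] [Algebra R E] [Algebra F E] [IsScalarTower R F E] {K : IntermediateField F E}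
    {x : E} (hxK : x ∈ K) (hx0 : x ≠ 0) (hx : IsIntegral R x) (hxinv : IsIntegral R x⁻¹) :
    ∃ u : (integralClosure R K)ˣ, (((u : integralClosure R K) : K) : E) = x := by
  let a : integralClosure R K := ⟨⟨x, hxK⟩, IntermediateField.coe_isIntegral_iff.mp hx⟩
  let b : integralClosure R K := ⟨⟨x⁻¹, inv_mem hxK⟩, IntermediateField.coe_isIntegral_iff.mp hxinv⟩
  have hab : a * b = 1 := Subtype.ext (Subtype.ext (mul_inv_cancel₀ hx0))
  exact ⟨.mkOfMulEqOne a b hab, rfl⟩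

open IntermediateField in
theorem euler_system_value_is_unit_general {S : Finset ℕ} {φ : Qbar → Qbar}
    (hφ : IsNormCompatible S φ) {η : Qbar} (hηW : η ∈ WS S) (hη1 : η ≠ 1) (hinv : φ η⁻¹ = φ η) :
    (∃ u : (integralClosure ℤ ℚ⟮η + η⁻¹⟯)ˣ,
      (((u : integralClosure ℤ ℚ⟮η + η⁻¹⟯) : ℚ⟮η + η⁻¹⟯) : Qbar) = φ η) ∧
    IsIntegral ℤ (φ η) ∧ IsIntegral ℤ (φ η)⁻¹ := by
  obtain ⟨hint, hintinv⟩ := hφ.isIntegral_apply_and_inv hηW hη1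
  exact ⟨exists_unit_integralClosure_of_isIntegral (hφ.apply_mem_adjoin_add_inv hηW hinv)
    (hφ.ne_zero η hηW) hint hintinv, hint, hintinv⟩

open IntermediateField in
/-- Proposition 2.3. For an Euler system `φ` for `S` and any
`η ∈ W_S` with `η ≠ 1`, the value `φ(η)` is a unit of the ring of integers of the real
cyclotomic field `ℚ(η)⁺ = ℚ(η + η⁻¹)`; in particular it is an algebraic unit. -/
theorem euler_system_value_is_unit
    (S : Finset ℕ) (φ : Qbar → Qbar) (hφ : IsEulerSystem S φ)
    (η : Qbar) (hηW : η ∈ WS S) (hη1 : η ≠ 1) :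
    (∃ u : (integralClosure ℤ ↥(adjoin ℚ ({η + η⁻¹} : Set Qbar)))ˣ,
      (((u : integralClosure ℤ ↥(adjoin ℚ ({η + η⁻¹} : Set Qbar))) :
          ↥(adjoin ℚ ({η + η⁻¹} : Set Qbar))) : Qbar) = φ η) ∧
    IsIntegral ℤ (φ η) ∧ IsIntegral ℤ (φ η)⁻¹ :=
  euler_system_value_is_unit_general hφ.isNormCompatible hηW hη1 (hφ.map_inv η hηW)
end
end

section
/- (Lemma 8.2) Let p be a prime, G a finite abelian group, and B a finitely generated ℤ_p[G]-module that is p-torsion free. Let f ∈ ℤ_p[G] be a non-zero-divisor and b ∈ B. If ψ(b) ∈ f·ℤ_p[G] for every ℤ_p[G]-module homomorphism ψ : B → ℤ_p[G], then b ∈ f·B. -/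
/-! Every `R`-linear functional `φ` on `M` is the coefficient at `1` of the `R[G]`-linear map
`x ↦ ∑ g, φ (g • x) • g⁻¹`. As `R[G]` is integral over `R`, the non-zero-divisor `f` divides some
`d ≠ 0` in `R`, say `f * h = d`. Then `d` divides `ψ (h • b) = h * ψ b` for all `R[G]`-linear `ψ`,
hence `φ (h • b)` for all functionals `φ`, so `h • b = d • c` because `M` is projective over `R`.
Thus `d • b = f • h • b = d • f • c`, and `d` can be cancelled. -/

noncomputable section

open scoped MonoidAlgebra nonZeroDivisors

theorem isTorsionFree_of_isSMulRegular_irreducible {R M : Type*} [CommRing R] [IsDomain R]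
    [IsDiscreteValuationRing R] [AddCommMonoid M] [Module R M] {ϖ : R} (hϖ : Irreducible ϖ)
    (hM : IsSMulRegular M ϖ) : Module.IsTorsionFree R M where
  isSMulRegular r hr := by
    obtain ⟨n, u, rfl⟩ := IsDiscreteValuationRing.eq_unit_mul_pow_irreducible hr.ne_zero hϖ
    exact (u.isSMulRegular M).mul (hM.pow n)

theorem exists_eq_smul_of_forall_dual_dvd {R M : Type*} [CommSemiring R] [AddCommMonoid M]
    [Module R M] [Module.Projective R M] {d : R} {x : M}
    (hx : ∀ φ : Module.Dual R M, d ∣ φ x) : ∃ y : M, x = d • y := by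
  obtain ⟨s, hs⟩ := Module.projective_def.mp ‹Module.Projective R M›
  have hdvd (m : M) : d ∣ s x m := hx (Finsupp.lapply m ∘ₗ s)
  choose c hc using hdvd
  refine ⟨∑ m ∈ (s x).support, c m • m, ?_⟩
  calc
    x = ∑ m ∈ (s x).support, s x m • m := (hs x).symm
    _ = ∑ m ∈ (s x).support, d • c m • m :=
      Finset.sum_congr rfl fun m _ ↦ by rw [hc m, mul_smul]
    _ = d • ∑ m ∈ (s x).support, c m • m := Finset.smul_sum.symm

section GroupAlgebra

variable {R G M : Type*} [CommRing R] [Group G] [Finite G] [AddCommGroup M] [Module R M]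
  [Module R[G] M] [IsScalarTower R R[G] M]

theorem exists_hom_coeff_one_eq (φ : Module.Dual R M) :
    ∃ ψ : M →ₗ[R[G]] R[G], ∀ x, (ψ x).coeff 1 = φ x := by
  classical
  have := Fintype.ofFinite G
  refine ⟨(MonoidAlgebra.lsingle 1 ∘ₗ φ).sumOfConjugatesEquivariant G, fun x ↦ ?_⟩
  simp [LinearMap.sumOfConjugatesEquivariant_apply, LinearMap.conjugate_apply,
    MonoidAlgebra.single_mul_single, Finsupp.single_apply, ← MonoidAlgebra.one_def]

theorem dvd_dual_of_forall_hom_eq_smul {d : R} {x : M}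
    (hx : ∀ ψ : M →ₗ[R[G]] R[G], ∃ a, ψ x = d • a) (φ : Module.Dual R M) : d ∣ φ x := by
  obtain ⟨ψ, hψ⟩ := exists_hom_coeff_one_eq (G := G) φ
  obtain ⟨a, ha⟩ := hx ψ
  exact ⟨a.coeff 1, by rw [← hψ, ha, MonoidAlgebra.coeff_smul_apply, smul_eq_mul]⟩

theorem mem_smul_of_all_homs_mem_general [IsDomain R] [Module.Projective R M] {f : R[G]}
    (hf : f ∈ R[G]⁰) {b : M} (hb : ∀ ψ : M →ₗ[R[G]] R[G], f ∣ ψ b) : ∃ c : M, b = f • c := by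
  obtain ⟨h, hh, d, hd, hfh⟩ :=
    (Algebra.IsIntegral.isIntegral (R := R) f).isAlgebraic.exists_nonzero_eq_adjoin_mul hf
  have hhf : h * f = algebraMap R R[G] d := by
    rw [← hfh, (Algebra.commute_of_mem_adjoin_self hh).eq]
  have hdvd (ψ : M →ₗ[R[G]] R[G]) : ∃ a, ψ (h • b) = d • a := by
    obtain ⟨a, ha⟩ := hb ψ
    exact ⟨a, by rw [map_smul, ha, smul_eq_mul, ← mul_assoc, hhf, Algebra.smul_def]⟩
  obtain ⟨c, hc⟩ := exists_eq_smul_of_forall_dual_dvd (dvd_dual_of_forall_hom_eq_smul hdvd)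
  refine ⟨c, smul_right_injective M hd ?_⟩
  calc
    d • b = f • h • b := by rw [smul_smul, hfh, algebraMap_smul]
    _ = d • f • c := by rw [hc, smul_algebra_smul_comm]

end GroupAlgebra

/-- Lemma 8.2, Rubin. Let `p` be a prime, `G` a finite abelian
group, and `B` a finitely generated `ℤ_p[G]`-module which is `p`-torsion free.  Let
`f ∈ ℤ_p[G]` be a non-zero-divisor and `b ∈ B`.  If `ψ(b) ∈ f·ℤ_p[G]` for every
`ℤ_p[G]`-homomorphism `ψ : B → ℤ_p[G]`, then `b ∈ f·B`. -/
theorem mem_smul_of_all_homs_mem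
    (p : ℕ) [Fact p.Prime]
    (G : Type) [CommGroup G] [Fintype G]
    (B : Type) [AddCommGroup B] [Module (MonoidAlgebra ℤ_[p] G) B]
    (hfg : Module.Finite (MonoidAlgebra ℤ_[p] G) B)
    (htf : Function.Injective (fun b : B => (p : ℕ) • b))
    (f : MonoidAlgebra ℤ_[p] G) (hf : f ∈ nonZeroDivisors (MonoidAlgebra ℤ_[p] G))
    (b : B)
    (hb : ∀ ψ : B →ₗ[MonoidAlgebra ℤ_[p] G] MonoidAlgebra ℤ_[p] G,
      ψ b ∈ Ideal.span ({f} : Set (MonoidAlgebra ℤ_[p] G))) :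
    ∃ c : B, b = f • c := by
  let _ : Module ℤ_[p] B := Module.compHom B (algebraMap ℤ_[p] ℤ_[p][G])
  have : IsScalarTower ℤ_[p] ℤ_[p][G] B := .of_algebraMap_smul fun _ _ ↦ rfl
  have : Module.Finite ℤ_[p] B := .trans ℤ_[p][G] B
  have : Module.IsTorsionFree ℤ_[p] B :=
    isTorsionFree_of_isSMulRegular_irreducible PadicInt.irreducible_p
      (by simpa only [IsSMulRegular, Nat.cast_smul_eq_nsmul] using htf)
  exact mem_smul_of_all_homs_mem_general hf fun ψ ↦ Ideal.mem_span_singleton.mp (hb ψ)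
end
end
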